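/- arXiv:1510.05246 — 4 statements merged into one kernel-verified Lean document; each statement's English description precedes it below -/
import Mathlib

section
/- Let G be a finite connected 3-regular simple graph on n vertices with n ≥ 8. Then G has a spanning tree with at most ⌊(2n + 4)/9⌋ leaves. -/
theorem tree_of_parent {V : Type*} [Fintype V] (G : SimpleGraph V) (r : V) (p : V → V) (d : V → ℕ)
    (hadj : ∀ x, x ≠ r → G.Adj (p x) x) (hd : ∀ x, x ≠ r → d (p x) < d x) :
    ∃ T : SimpleGraph V, T ≤ G ∧ T.IsTree ∧
      (∀ x, x ≠ r → (T.neighborSet x).ncard = 1 → ∀ y, y ≠ r → p y ≠ x) ∧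
      ((T.neighborSet r).ncard = 1 → ∀ y z, y ≠ r → z ≠ r → p y = r → p z = r → y = z) := by
  classical
  let T : SimpleGraph V :=
    { Adj := fun x y => (x ≠ r ∧ p x = y) ∨ (y ≠ r ∧ p y = x)
      symm := ⟨fun x y h => h.symm⟩
      loopless := ⟨fun x h => by
        rcases h with ⟨h, e⟩ | ⟨h, e⟩ <;> (have := hd x h; rw [e] at this; omega)⟩ }
  have hT : ∀ x, x ≠ r → T.Adj (p x) x := fun x hx => Or.inr ⟨hx, rfl⟩
  have hreach : ∀ k, ∀ x, d x = k → T.Reachable r x := by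
    intro k
    induction k using Nat.strong_induction_on with
    | _ k ih =>
      intro x hx
      by_cases hr : x = r
      · rw [hr]
      · exact (ih (d (p x)) (hx ▸ hd x hr) (p x) rfl).trans (hT x hr).reachable
  refine ⟨T, ?_, ?_, ?_, ?_⟩
  · intro x y h
    rcases h with ⟨h, e⟩ | ⟨h, e⟩
    · exact e ▸ (hadj x h).symm
    · exact e ▸ hadj y h
  · rw [SimpleGraph.isTree_iff_connected_and_card]
    refine ⟨?_, ?_⟩
    · have : Nonempty V := ⟨r⟩
      exact ⟨fun x y => (hreach _ x rfl).symm.trans (hreach _ y rfl)⟩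
    · have hE : T.edgeSet = (fun x => s(p x, x)) '' ({r}ᶜ : Set V) := by
        ext e
        induction e using Sym2.ind with
        | _ a b =>
          simp only [SimpleGraph.mem_edgeSet, Set.mem_image, Set.mem_compl_iff, Set.mem_singleton_iff]
          constructor
          · rintro (⟨h, e⟩ | ⟨h, e⟩)
            · exact ⟨a, h, by rw [e, Sym2.eq_swap]⟩
            · exact ⟨b, h, by rw [e]⟩
          · rintro ⟨x, hx, e⟩
            have := hT x hx
            rw [← SimpleGraph.mem_edgeSet, e] at this
            exact this
      have hinj : Set.InjOn (fun x => s(p x, x)) ({r}ᶜ : Set V) := by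
        intro x hx y hy h
        simp only [Sym2.eq_iff] at h
        rcases h with ⟨_, h⟩ | ⟨h1, h2⟩
        · exact h
        · have := hd x hx
          have h' := hd y hy
          rw [h1] at this
          rw [← h2] at h'
          omega
      have hc : Nat.card T.edgeSet = ({r}ᶜ : Set V).ncard := by
        rw [Nat.card_coe_set_eq, hE, hinj.ncard_image]
      have := Set.ncard_add_ncard_compl ({r} : Set V)
      rw [Set.ncard_singleton] at this
      omega
  · intro x hx h y hy e
    obtain ⟨a, ha⟩ := Set.ncard_eq_one.1 h
    have h1 : p x ∈ T.neighborSet x := (hT x hx).symm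
    have h2 : y ∈ T.neighborSet x := e ▸ hT y hy
    rw [ha] at h1 h2
    have h3 : p x = y := h1.trans h2.symm
    have := hd x hx
    have h' := hd y hy
    rw [h3] at this
    rw [e] at h'
    omega
  · intro h y z hy hz ey ez
    obtain ⟨a, ha⟩ := Set.ncard_eq_one.1 h
    have h1 : z ∈ T.neighborSet r := ez ▸ hT z hz
    have h2 : y ∈ T.neighborSet r := ey ▸ hT y hy
    rw [ha] at h1 h2
    exact h2.trans h1.symm

theorem tree_of_list {V : Type*} [Fintype V] (G : SimpleGraph V) (L : List V) (hne : L ≠ [])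
    (hc : L.IsChain G.Adj) (hnd : L.Nodup) (hall : ∀ x, x ∈ L) :
    ∃ T : SimpleGraph V, T ≤ G ∧ T.IsTree ∧ {v : V | (T.neighborSet v).ncard = 1}.ncard ≤ 2 := by
  classical
  have hlen : 0 < L.length := List.length_pos_iff.2 hne
  have hidx : ∀ x, L.idxOf x < L.length := fun x => List.idxOf_lt_length_iff.2 (hall x)
  have hlt : ∀ x, L.idxOf x - 1 < L.length := fun x => by have := hidx x; omega
  have hr : ∀ x, x ≠ L[0] → 0 < L.idxOf x := by
    intro x hx
    by_contra h
    have h0 : L.idxOf x = 0 := by omega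
    apply hx
    have := List.getElem_idxOf (hidx x)
    simp only [h0] at this
    exact this.symm
  have hch := List.isChain_iff_getElem.1 hc
  obtain ⟨T, h1, h2, h3, h4⟩ := tree_of_parent G (L[0]) (fun x => L[L.idxOf x - 1]'(hlt x))
    (fun x => L.idxOf x) (by
      intro x hx
      have h0 := hr x hx
      have := hch (L.idxOf x - 1) (by have := hidx x; omega)
      have e : L.idxOf x - 1 + 1 = L.idxOf x := by omega
      simp only [e, List.getElem_idxOf] at this
      exact this) (by
      intro x hx
      have h0 := hr x hx
      show L.idxOf (L[L.idxOf x - 1]'(hlt x)) < L.idxOf x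
      rw [hnd.idxOf_getElem]
      omega)
  refine ⟨T, h1, h2, ?_⟩
  have : {v : V | (T.neighborSet v).ncard = 1} ⊆ {L[0], L[L.length - 1]} := by
    intro x hx
    by_contra hcon
    simp only [Set.mem_insert_iff, Set.mem_singleton_iff, not_or] at hcon
    have hlast : L.idxOf x + 1 < L.length := by
      by_contra h
      have h0 : L.idxOf x = L.length - 1 := by have := hidx x; omega
      apply hcon.2
      have := List.getElem_idxOf (hidx x)
      simp only [h0] at this
      exact this.symm
    refine h3 x hcon.1 hx (L[L.idxOf x + 1]) ?_ ?_
    · intro h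
      have := (hnd.getElem_inj_iff).1 h
      omega
    · simp only [hnd.idxOf_getElem]
      simp
  exact (Set.ncard_le_ncard this (Set.toFinite _)).trans (by
    have := Set.ncard_insert_le (L[0]) {L[L.length - 1]}
    rw [Set.ncard_singleton] at this
    exact this)

structure RDState {V : Type*} [Fintype V] [DecidableEq V] (G : SimpleGraph V) [DecidableRel G.Adj]
    (r : V) (S : Finset V) (p : V → V) (A W : V → Finset V) (c : V) : Prop where
  rS : r ∈ S
  cS : c ∈ S
  Ar : A r = {r}
  pS : ∀ x ∈ S, x ≠ r → p x ∈ S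
  adj : ∀ x ∈ S, x ≠ r → G.Adj (p x) x
  Ax : ∀ x ∈ S, x ≠ r → A x = insert x (A (p x))
  xnot : ∀ x ∈ S, x ≠ r → x ∉ A (p x)
  AS : ∀ x ∈ S, A x ⊆ S
  self : ∀ x ∈ S, x ∈ A x
  comp : ∀ x ∈ S, ∀ y ∈ S, G.Adj x y → x ∈ A y ∨ y ∈ A x
  stack : ∀ x ∈ S, ∀ y, y ∉ S → G.Adj x y → x ∈ A c
  trans : ∀ x ∈ S, ∀ y ∈ A x, A y ⊆ A x
  chain : ∀ x ∈ S, ∀ y ∈ A x, ∀ z ∈ A x, y ∈ A z ∨ z ∈ A y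
  anti : ∀ x ∈ S, ∀ y ∈ S, x ∈ A y → y ∈ A x → x = y
  Wdesc : ∀ x ∈ S, ∀ y ∈ S, x ∈ A y → y ≠ x → y ∈ W x
  WU : ∀ x ∈ S, ∀ y, y ∉ S → y ∈ W x
  Wanc : ∀ x ∈ S, x ≠ r → ∀ a ∈ A (p x), a ∉ W x
  min : ∀ x ∈ S, x ≠ r → ∀ y ∈ W x, G.Adj (p x) y →
    ((W x).filter (G.Adj x)).card ≤ ((W x).filter (G.Adj y)).card

theorem rd_step {V : Type*} [Fintype V] [DecidableEq V] (G : SimpleGraph V) [DecidableRel G.Adj]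
    (hG : G.Connected) (r : V) (S : Finset V) (p : V → V) (A W : V → Finset V) (c : V)
    (h : RDState G r S p A W c) (hS : S ≠ Finset.univ) :
    ∃ x, x ∉ S ∧ ∃ p' A' W' c', RDState G r (insert x S) p' A' W' c' := by
  obtain ⟨a, ha, b, hb, hab⟩ : ∃ a ∈ S, ∃ b, b ∉ S ∧ G.Adj a b := by
    obtain ⟨z, hz⟩ : ∃ z, z ∉ S := by
      by_contra hcon
      push Not at hcon
      exact hS (Finset.eq_univ_iff_forall.2 hcon)
    obtain ⟨w⟩ := hG.preconnected r z
    obtain ⟨d, hd, h1, h2⟩ := w.exists_boundary_dart (S : Set V) h.rS hz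
    exact ⟨d.fst, h1, d.snd, h2, d.adj⟩
  obtain ⟨u, hu, hmax⟩ := Finset.exists_max_image ((A c).filter (fun u => ∃ b, b ∉ S ∧ G.Adj u b))
    (fun u => (A u).card) ⟨a, by simp only [Finset.mem_filter]; exact ⟨h.stack a ha b hb hab, b, hb, hab⟩⟩
  simp only [Finset.mem_filter] at hu hmax
  obtain ⟨huc, hub⟩ := hu
  have huS : u ∈ S := h.AS c h.cS huc
  have hst : ∀ y ∈ S, ∀ b, b ∉ S → G.Adj y b → y ∈ A u := by
    intro y hy b hb hyb
    have hyc := h.stack y hy b hb hyb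
    rcases h.chain c h.cS y hyc u huc with h1 | h1
    · exact h1
    · have h2 := h.trans y hy u h1
      have h3 := Finset.eq_of_subset_of_card_le h2 (hmax y ⟨hyc, b, hb, hyb⟩)
      rw [h3]
      exact h.self y hy
  obtain ⟨x, hx, hmin⟩ := Finset.exists_min_image (Finset.univ.filter (fun x => x ∉ S ∧ G.Adj u x))
    (fun x => (Sᶜ.filter (G.Adj x)).card) (by
      obtain ⟨b, hb⟩ := hub
      exact ⟨b, by simpa using hb⟩)
  simp only [Finset.mem_filter, Finset.mem_univ, true_and] at hx hmin
  obtain ⟨hxS, hux⟩ := hx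
  have hxr : x ≠ r := fun e => hxS (e ▸ h.rS)
  have hne : ∀ y ∈ S, y ≠ x := fun y hy e => hxS (e ▸ hy)
  have hAS := h.AS
  refine ⟨x, hxS, Function.update p x u, Function.update A x (insert x (A u)),
    Function.update W x Sᶜ, x, ?_⟩
  have eA : ∀ y ∈ S, Function.update A x (insert x (A u)) y = A y := fun y hy =>
    Function.update_of_ne (hne y hy) _ _
  have eW : ∀ y ∈ S, Function.update W x Sᶜ y = W y := fun y hy =>
    Function.update_of_ne (hne y hy) _ _
  have ep : ∀ y ∈ S, Function.update p x u y = p y := fun y hy =>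
    Function.update_of_ne (hne y hy) _ _
  have eAx : Function.update A x (insert x (A u)) x = insert x (A u) := Function.update_self _ _ _
  have eWx : Function.update W x Sᶜ x = Sᶜ := Function.update_self _ _ _
  have epx : Function.update p x u x = u := Function.update_self _ _ _
  generalize Function.update A x (insert x (A u)) = A' at *
  generalize Function.update W x Sᶜ = W' at *
  generalize Function.update p x u = p' at *
  have hxA : ∀ y ∈ S, x ∉ A y := fun y hy hh => hxS (hAS y hy hh)
  have hAS' : ∀ y ∈ S, ∀ z ∈ A y, z ∈ S := fun y hy z hz => hAS y hy hz
  constructor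
  · simp [h.rS]
  · simp
  · rw [eA r h.rS, h.Ar]
  · have := h.pS
    grind
  · have := h.adj
    grind
  · have := h.Ax
    have := h.pS
    grind
  · have := h.xnot
    have := h.pS
    grind
  · intro y hy z hz
    grind
  · have := h.self
    grind
  · have := h.comp
    have hs := hst
    have hsymm : ∀ a b, G.Adj a b → G.Adj b a := fun a b h => h.symm
    have hirr : ∀ a, ¬ G.Adj a a := fun a => G.irrefl
    intro y hy z hz hyz
    rw [Finset.mem_insert] at hy hz
    rcases hy with rfl | hy <;> rcases hz with rfl | hz
    · exact absurd hyz G.irrefl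
    · right; rw [eAx]; exact Finset.mem_insert_of_mem (hst z hz _ hxS hyz.symm)
    · left; rw [eAx]; exact Finset.mem_insert_of_mem (hst y hy _ hxS hyz)
    · rw [eA y hy, eA z hz]; exact this y hy z hz hyz
  · intro y hy z hz hyz
    rw [eAx]
    rw [Finset.mem_insert, not_or] at hz
    rcases Finset.mem_insert.1 hy with rfl | hy
    · simp
    · exact Finset.mem_insert_of_mem (hst y hy z hz.2 hyz)
  · have ht := h.trans
    have hs := h.self
    clear hst hmin hmax hub hS hAS hux eW ep epx eWx
    intro y hy z hz w hw
    have : ∀ a ∈ S, ∀ b ∈ A a, ∀ d ∈ A b, d ∈ A a := fun a ha b hb d hd => ht a ha b hb hd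
    rcases Finset.mem_insert.1 hy with rfl | hy
    · rw [eAx, Finset.mem_insert] at hz
      rw [eAx, Finset.mem_insert]
      rcases hz with rfl | hz
      · rwa [eAx, Finset.mem_insert] at hw
      · rw [eA z (hAS' u huS z hz)] at hw
        exact Or.inr (this u huS z hz w hw)
    · rw [eA y hy] at hz ⊢
      rw [eA z (hAS' y hy z hz)] at hw
      exact this y hy z hz w hw
  · have hc := h.chain
    have hs := h.self
    clear hst hmin hmax hub hS hAS hux eW ep epx eWx
    intro y hy z hz w hw
    rcases Finset.mem_insert.1 hy with rfl | hy
    · rw [eAx, Finset.mem_insert] at hz hw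
      rcases hz with rfl | hz <;> rcases hw with rfl | hw
      · left; rw [eAx]; simp
      · right; rw [eAx]; exact Finset.mem_insert_of_mem hw
      · left; rw [eAx]; exact Finset.mem_insert_of_mem hz
      · rw [eA z (hAS' u huS z hz), eA w (hAS' u huS w hw)]
        exact hc u huS z hz w hw
    · rw [eA y hy] at hz hw
      rw [eA z (hAS' y hy z hz), eA w (hAS' y hy w hw)]
      exact hc y hy z hz w hw
  · intro y hy z hz h1 h2
    rw [Finset.mem_insert] at hy hz
    rcases hy with rfl | hy <;> rcases hz with rfl | hz
    · rfl
    · rw [eA z hz] at h1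
      exact absurd h1 (hxA z hz)
    · rw [eA y hy] at h2
      exact absurd h2 (hxA y hy)
    · rw [eA z hz] at h1
      rw [eA y hy] at h2
      exact h.anti y hy z hz h1 h2
  · intro y hy z hz h1 h2
    rw [Finset.mem_insert] at hy hz
    rcases hy with rfl | hy <;> rcases hz with rfl | hz
    · exact absurd rfl h2
    · rw [eA z hz] at h1
      exact absurd h1 (hxA z hz)
    · rw [eW y hy]
      exact h.WU y hy _ hxS
    · rw [eA z hz] at h1
      rw [eW y hy]
      exact h.Wdesc y hy z hz h1 h2
  · intro y hy z hz
    rw [Finset.mem_insert, not_or] at hz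
    rcases Finset.mem_insert.1 hy with rfl | hy
    · rw [eWx]; simpa using hz.2
    · rw [eW y hy]
      exact h.WU y hy z hz.2
  · intro y hy hyr a ha
    rcases Finset.mem_insert.1 hy with rfl | hy
    · rw [epx, eA u huS] at ha
      rw [eWx]
      simpa using hAS' u huS a ha
    · rw [ep y hy, eA _ (h.pS y hy hyr)] at ha
      rw [eW y hy]
      exact h.Wanc y hy hyr a ha
  · intro y hy hyr z hz hpz
    rcases Finset.mem_insert.1 hy with rfl | hy
    · rw [epx] at hpz
      rw [eWx] at hz ⊢
      exact hmin z ⟨by simpa using hz, hpz⟩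
    · rw [ep y hy] at hpz
      rw [eW y hy] at hz ⊢
      exact h.min y hy hyr z hz hpz

theorem rd_exists {V : Type*} [Fintype V] [DecidableEq V] (G : SimpleGraph V) [DecidableRel G.Adj]
    (hG : G.Connected) (r : V) : ∃ p A W c, RDState G r Finset.univ p A W c := by
  have key : ∀ k, ∀ S : Finset V, ∀ p A W c, Sᶜ.card = k → RDState G r S p A W c →
      ∃ p A W c, RDState G r Finset.univ p A W c := by
    intro k
    induction k with
    | zero =>
      intro S p A W c hk h
      rw [Finset.card_eq_zero, Finset.compl_eq_empty_iff] at hk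
      subst hk
      exact ⟨p, A, W, c, h⟩
    | succ k ih =>
      intro S p A W c hk h
      have hS : S ≠ Finset.univ := by
        rintro rfl
        simp at hk
      obtain ⟨x, hx, p', A', W', c', h'⟩ := rd_step G hG r S p A W c h hS
      refine ih _ p' A' W' c' ?_ h'
      rw [Finset.compl_insert, Finset.card_erase_of_mem (by simpa using hx)]
      omega
  refine key _ {r} (fun _ => r) (fun _ => {r}) (fun _ => Finset.univ) r rfl ?_
  constructor <;> simp

structure RDTree {V : Type*} [Fintype V] [DecidableEq V] (G : SimpleGraph V) [DecidableRel G.Adj]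
    (r : V) (p : V → V) (A : V → Finset V) : Prop where
  Ar : A r = {r}
  adj : ∀ x, x ≠ r → G.Adj (p x) x
  Ax : ∀ x, x ≠ r → A x = insert x (A (p x))
  xnot : ∀ x, x ≠ r → x ∉ A (p x)
  self : ∀ x, x ∈ A x
  comp : ∀ x y, G.Adj x y → x ∈ A y ∨ y ∈ A x
  trans : ∀ x, ∀ y ∈ A x, A y ⊆ A x
  chain : ∀ x, ∀ y ∈ A x, ∀ z ∈ A x, y ∈ A z ∨ z ∈ A y
  anti : ∀ x y, x ∈ A y → y ∈ A x → x = y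
  two : ∀ x l a b, x ≠ r → x ∈ A l → l ≠ x → G.Adj (p x) l → a ≠ b → a ∈ A (p x) → b ∈ A (p x) →
    G.Adj l a → G.Adj l b → ∃ z ∈ A (p x), z ≠ p x ∧ G.Adj x z

theorem rdtree_exists {V : Type*} [Fintype V] [DecidableEq V] (G : SimpleGraph V)
    [DecidableRel G.Adj] (hG : G.Connected) (hreg : ∀ v : V, G.degree v = 3) (r : V) :
    ∃ p A, RDTree G r p A := by
  obtain ⟨p, A, W, c, h⟩ := rd_exists G hG r
  refine ⟨p, A, h.Ar, fun x => h.adj x (Finset.mem_univ x), fun x => h.Ax x (Finset.mem_univ x),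
    fun x => h.xnot x (Finset.mem_univ x), fun x => h.self x (Finset.mem_univ x),
    fun x y => h.comp x (Finset.mem_univ x) y (Finset.mem_univ y),
    fun x => h.trans x (Finset.mem_univ x), fun x => h.chain x (Finset.mem_univ x),
    fun x y => h.anti x (Finset.mem_univ x) y (Finset.mem_univ y), ?_⟩
  intro x l a b hxr hxl hlx hpl hab ha hb hla hlb
  have hsplit : ∀ y, ((W x).filter (G.Adj y)).card + ((W x)ᶜ.filter (G.Adj y)).card = 3 := by
    intro y
    rw [← hreg y, ← SimpleGraph.card_neighborFinset_eq_degree, ← Finset.card_union_of_disjoint]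
    · congr 1
      ext z
      simp only [Finset.mem_union, Finset.mem_filter, Finset.mem_compl,
        SimpleGraph.mem_neighborFinset]
      tauto
    · rw [Finset.disjoint_left]
      intro z hz hz'
      simp only [Finset.mem_filter, Finset.mem_compl] at hz hz'
      exact hz'.1 hz.1
  have hlW := h.Wdesc x (Finset.mem_univ x) l (Finset.mem_univ l) hxl hlx
  have hmin := h.min x (Finset.mem_univ x) hxr l hlW hpl
  have hWa := h.Wanc x (Finset.mem_univ x) hxr
  have h2 : 2 ≤ ((W x)ᶜ.filter (G.Adj l)).card := by
    have : ({a, b} : Finset V) ⊆ (W x)ᶜ.filter (G.Adj l) := by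
      intro z hz
      simp only [Finset.mem_insert, Finset.mem_singleton] at hz
      simp only [Finset.mem_filter, Finset.mem_compl]
      rcases hz with rfl | rfl
      · exact ⟨hWa _ ha, hla⟩
      · exact ⟨hWa _ hb, hlb⟩
    have h3 := Finset.card_le_card this
    rwa [Finset.card_pair hab] at h3
  have h3 : 1 < ((W x)ᶜ.filter (G.Adj x)).card := by
    have := hsplit x
    have := hsplit l
    omega
  obtain ⟨z, hz, hzp⟩ := Finset.exists_mem_ne h3 (p x)
  simp only [Finset.mem_filter, Finset.mem_compl] at hz
  refine ⟨z, ?_, hzp, hz.2⟩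
  rcases h.comp x (Finset.mem_univ x) z (Finset.mem_univ z) hz.2 with h4 | h4
  · exact absurd (h.Wdesc x (Finset.mem_univ x) z (Finset.mem_univ z) h4 hz.2.ne') hz.1
  · rw [h.Ax x (Finset.mem_univ x) hxr, Finset.mem_insert] at h4
    exact h4.resolve_left hz.2.ne'

section
variable {V : Type*} [Fintype V] [DecidableEq V] {G : SimpleGraph V} [DecidableRel G.Adj]
  {r : V} {p : V → V} {A : V → Finset V}

theorem RDTree.card_lt (h : RDTree G r p A) (x : V) (hx : x ≠ r) : (A (p x)).card < (A x).card := by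
  rw [h.Ax x hx, Finset.card_insert_of_notMem (h.xnot x hx)]
  omega

theorem RDTree.induct (h : RDTree G r p A) {P : V → Prop} (h0 : P r)
    (h1 : ∀ x, x ≠ r → P (p x) → P x) (x : V) : P x := by
  have : ∀ k, ∀ x, (A x).card = k → P x := by
    intro k
    induction k using Nat.strong_induction_on with
    | _ k ih =>
      intro x hx
      by_cases hr : x = r
      · rw [hr]; exact h0
      · exact h1 x hr (ih _ (hx ▸ h.card_lt x hr) _ rfl)
  exact this _ x rfl

theorem RDTree.root_mem (h : RDTree G r p A) (x : V) : r ∈ A x := by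
  induction x using h.induct with
  | h0 => exact h.self r
  | h1 x hx ih => rw [h.Ax x hx]; exact Finset.mem_insert_of_mem ih

theorem RDTree.child (h : RDTree G r p A) (x z : V) : x ∈ A z → x ≠ z →
    ∃ y, y ≠ r ∧ p y = x ∧ y ∈ A z := by
  induction z using h.induct with
  | h0 => intro h1 h2; rw [h.Ar, Finset.mem_singleton] at h1; exact absurd h1 h2
  | h1 z hz ih =>
    intro h1 h2
    rw [h.Ax z hz, Finset.mem_insert] at h1
    have h3 := h1.resolve_left h2
    by_cases hp : x = p z
    · exact ⟨z, hz, hp.symm, h.self z⟩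
    · obtain ⟨y, hy, e, hm⟩ := ih h3 hp
      exact ⟨y, hy, e, by rw [h.Ax z hz]; exact Finset.mem_insert_of_mem hm⟩

/-- Number of neighbours that are ancestors. -/
def upc (G : SimpleGraph V) [DecidableRel G.Adj] (A : V → Finset V) (x : V) : ℕ :=
  (Finset.univ.filter (fun z => G.Adj x z ∧ z ∈ A x)).card

/-- Childless vertices other than the root. -/
def lvs (r : V) (p : V → V) : Finset V :=
  Finset.univ.filter (fun x => x ≠ r ∧ ∀ y, y ≠ r → p y ≠ x)

theorem RDTree.sum_up (h : RDTree G r p A) (hreg : ∀ v : V, G.degree v = 3) :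
    2 * ∑ x, upc G A x = 3 * Fintype.card V := by
  have e1 : ∀ x, upc G A x + (Finset.univ.filter (fun z => G.Adj x z ∧ x ∈ A z)).card = 3 := by
    intro x
    rw [upc, ← hreg x, ← SimpleGraph.card_neighborFinset_eq_degree, ← Finset.card_union_of_disjoint]
    · congr 1
      ext z
      simp only [Finset.mem_union, Finset.mem_filter, Finset.mem_univ, true_and,
        SimpleGraph.mem_neighborFinset]
      have := h.comp x z
      tauto
    · rw [Finset.disjoint_left]
      intro z hz hz'
      simp only [Finset.mem_filter, Finset.mem_univ, true_and] at hz hz'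
      exact hz.1.ne (h.anti x z hz'.2 hz.2)
  have e2 : ∑ x, upc G A x = ∑ x, (Finset.univ.filter (fun z => G.Adj x z ∧ x ∈ A z)).card := by
    have := Finset.sum_card_bipartiteAbove_eq_sum_card_bipartiteBelow
      (s := (Finset.univ : Finset V)) (t := (Finset.univ : Finset V)) (fun x z => G.Adj x z ∧ z ∈ A x)
    simp only [Finset.bipartiteAbove, Finset.bipartiteBelow] at this
    unfold upc
    rw [this]
    simp only [G.adj_comm]
  have e3 : ∑ x, (upc G A x + (Finset.univ.filter (fun z => G.Adj x z ∧ x ∈ A z)).card)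
      = 3 * Fintype.card V := by
    simp only [e1]
    simp [mul_comm]
  rw [Finset.sum_add_distrib, ← e2] at e3
  omega

theorem RDTree.leaf_anc (h : RDTree G r p A) (l : V) (hl : l ∈ lvs r p) (z : V) (hz : l ∈ A z) :
    l = z := by
  by_contra hne
  obtain ⟨y, hy, e, _⟩ := h.child l z hz hne
  simp only [lvs, Finset.mem_filter, Finset.mem_univ, true_and] at hl
  exact hl.2 y hy e

theorem RDTree.leaf_nbr (h : RDTree G r p A) (l : V) (hl : l ∈ lvs r p) (z : V) (hz : G.Adj l z) :
    z ∈ A l := by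
  rcases h.comp l z hz with h1 | h1
  · exact absurd (h.leaf_anc l hl z h1) hz.ne
  · exact h1

theorem RDTree.up_leaf (h : RDTree G r p A) (hreg : ∀ v : V, G.degree v = 3) (l : V)
    (hl : l ∈ lvs r p) : upc G A l = 3 := by
  rw [upc, ← hreg l, ← SimpleGraph.card_neighborFinset_eq_degree]
  congr 1
  ext z
  simp only [Finset.mem_filter, Finset.mem_univ, true_and, SimpleGraph.mem_neighborFinset]
  exact ⟨fun h => h.1, fun hz => ⟨hz, h.leaf_nbr l hl z hz⟩⟩

theorem RDTree.parent_mem (h : RDTree G r p A) (x : V) (hx : x ≠ r) : p x ∈ A x := by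
  rw [h.Ax x hx]; exact Finset.mem_insert_of_mem (h.self _)

theorem RDTree.two_le_up (h : RDTree G r p A) (x z : V) (hx : x ≠ r) (hz : G.Adj x z)
    (hzA : z ∈ A x) (hzp : z ≠ p x) : 2 ≤ upc G A x := by
  rw [upc, ← Finset.card_pair hzp]
  apply Finset.card_le_card
  intro y hy
  simp only [Finset.mem_insert, Finset.mem_singleton] at hy
  simp only [Finset.mem_filter, Finset.mem_univ, true_and]
  rcases hy with rfl | rfl
  · exact ⟨hz, hzA⟩
  · exact ⟨(h.adj x hx).symm, h.parent_mem x hx⟩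

theorem RDTree.v2_exists (h : RDTree G r p A) (hreg : ∀ v : V, G.degree v = 3) (l : V)
    (hl : l ∈ lvs r p) : ∃ v, v ≠ r ∧ v ∈ A l ∧ v ≠ l ∧ G.Adj (p v) l ∧ p v ≠ r ∧
      2 ≤ upc G A v := by
  have hlr : l ≠ r := by
    simp only [lvs, Finset.mem_filter, Finset.mem_univ, true_and] at hl
    exact hl.1
  have hcard : ((G.neighborFinset l).erase (p l)).card = 2 := by
    rw [Finset.card_erase_of_mem (by simpa using (h.adj l hlr).symm),
      SimpleGraph.card_neighborFinset_eq_degree, hreg]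
  obtain ⟨a, b, hab, hE⟩ := Finset.card_eq_two.1 hcard
  have key : ∀ a b, a ≠ b → G.Adj l a → G.Adj l b → b ≠ p l → a ∈ A b →
      ∃ v, v ≠ r ∧ v ∈ A l ∧ v ≠ l ∧ G.Adj (p v) l ∧ p v ≠ r ∧ 2 ≤ upc G A v := by
    intro a b hab ha hb hbp hAb
    obtain ⟨v, hv, e, hvl⟩ := h.child b l (h.leaf_nbr l hl b hb) hb.ne'
    subst e
    have hvne : v ≠ l := fun e => hbp (by rw [e])
    obtain ⟨z, hz, hzp, hvz⟩ := h.two v l a (p v) hv hvl hvne.symm hb.symm hab hAb (h.self _) ha hb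
    refine ⟨v, hv, hvl, hvne, hb.symm, ?_, ?_⟩
    · intro e
      rw [e, h.Ar, Finset.mem_singleton] at hAb
      exact hab (hAb.trans e.symm)
    · exact h.two_le_up v z hv hvz (by rw [h.Ax v hv]; exact Finset.mem_insert_of_mem hz) hzp
  have ha : a ∈ (G.neighborFinset l).erase (p l) := by rw [hE]; simp
  have hb : b ∈ (G.neighborFinset l).erase (p l) := by rw [hE]; simp
  simp only [Finset.mem_erase, SimpleGraph.mem_neighborFinset] at ha hb
  rcases h.chain l a (h.leaf_nbr l hl a ha.2) b (h.leaf_nbr l hl b hb.2) with h1 | h1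
  · exact key a b hab ha.2 hb.2 hb.1 h1
  · exact key b a hab.symm hb.2 ha.2 ha.1 h1

theorem RDTree.count (h : RDTree G r p A) (hreg : ∀ v : V, G.degree v = 3) :
    2 * (Fintype.card V - 1 + 3 * (lvs r p).card) ≤ 3 * Fintype.card V ∧
    ∀ x, x ≠ r → G.Adj x r → p x ≠ r → x ∉ lvs r p →
      (∀ l ∈ lvs r p, ¬ (x ∈ A l ∧ x ≠ l ∧ G.Adj (p x) l)) →
      2 * (Fintype.card V + 3 * (lvs r p).card) ≤ 3 * Fintype.card V := by
  have hex : ∀ l, ∃ v, l ∈ lvs r p → (v ≠ r ∧ v ∈ A l ∧ v ≠ l ∧ G.Adj (p v) l ∧ p v ≠ r ∧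
      2 ≤ upc G A v) := by
    intro l
    by_cases hl : l ∈ lvs r p
    · obtain ⟨v, hv⟩ := h.v2_exists hreg l hl
      exact ⟨v, fun _ => hv⟩
    · exact ⟨l, fun h => absurd h hl⟩
  choose f hf using hex
  have hinj : Set.InjOn f (lvs r p : Set V) := by
    intro l hl l' hl' e
    have h1 := hf l hl
    have h2 := hf l' hl'
    rw [← e] at h2
    obtain ⟨a1, a2, a3, a4, a5, -⟩ := h1
    obtain ⟨-, b2, b3, b4, -, -⟩ := h2
    by_contra hne
    have hleaf : ∀ m ∈ lvs r p, m ≠ p (p (f l)) := by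
      intro m hm e
      simp only [lvs, Finset.mem_filter, Finset.mem_univ, true_and] at hm
      exact hm.2 _ a5 e.symm
    have hpf : f l ≠ p (p (f l)) := by
      intro e
      have h1 := h.card_lt _ a1
      have h2 := h.card_lt _ a5
      rw [← e] at h2
      omega
    have hc : ({l, l', f l, p (p (f l))} : Finset V).card = 4 := by
      rw [Finset.card_insert_of_notMem, Finset.card_insert_of_notMem,
        Finset.card_insert_of_notMem, Finset.card_singleton]
      · simpa using hpf
      · simp only [Finset.mem_insert, Finset.mem_singleton, not_or]
        exact ⟨b3.symm, hleaf l' hl'⟩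
      · simp only [Finset.mem_insert, Finset.mem_singleton, not_or]
        exact ⟨hne, a3.symm, hleaf l hl⟩
    have hs : ({l, l', f l, p (p (f l))} : Finset V) ⊆ G.neighborFinset (p (f l)) := by
      intro z hz
      simp only [Finset.mem_insert, Finset.mem_singleton] at hz
      rw [SimpleGraph.mem_neighborFinset]
      rcases hz with rfl | rfl | rfl | rfl
      · exact a4
      · exact b4
      · exact h.adj _ a1
      · exact (h.adj _ a5).symm
    have := Finset.card_le_card hs
    rw [hc, SimpleGraph.card_neighborFinset_eq_degree, hreg] at this
    omega
  have hup1 : ∀ x, x ≠ r → 1 ≤ upc G A x := by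
    intro x hx
    rw [upc, Nat.succ_le_iff, Finset.card_pos]
    exact ⟨p x, by simpa using ⟨(h.adj x hx).symm, h.parent_mem x hx⟩⟩
  have gen : ∀ E : Finset V, (∀ x ∈ E, x ≠ r ∧ x ∉ lvs r p ∧ x ∉ (lvs r p).image f ∧ 2 ≤ upc G A x) →
      2 * (Fintype.card V - 1 + 3 * (lvs r p).card + E.card) ≤ 3 * Fintype.card V := by
    intro E hE
    rw [← h.sum_up hreg]
    apply Nat.mul_le_mul_left
    have hsum : ∑ x : V, ((if x ∈ (Finset.univ.erase r) then 1 else 0) +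
        (if x ∈ lvs r p then 2 else 0) + (if x ∈ (lvs r p).image f then 1 else 0) +
        (if x ∈ E then 1 else 0)) =
        Fintype.card V - 1 + 3 * (lvs r p).card + E.card := by
      rw [Finset.sum_add_distrib, Finset.sum_add_distrib, Finset.sum_add_distrib]
      simp only [Finset.sum_ite_mem, Finset.univ_inter, Finset.sum_const, smul_eq_mul]
      rw [Finset.card_image_of_injOn hinj, Finset.card_erase_of_mem (Finset.mem_univ r),
        Finset.card_univ]
      omega
    rw [← hsum]
    apply Finset.sum_le_sum
    intro x _
    have c0 : x ∈ lvs r p → x ≠ r := by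
      intro hx
      simp only [lvs, Finset.mem_filter, Finset.mem_univ, true_and] at hx
      exact hx.1
    have c1 : x ∈ (lvs r p).image f → x ≠ r ∧ x ∉ lvs r p ∧ 2 ≤ upc G A x := by
      intro hx
      obtain ⟨l, hl, rfl⟩ := Finset.mem_image.1 hx
      obtain ⟨a1, a2, a3, a4, a5, a6⟩ := hf l hl
      exact ⟨a1, fun hm => a3 (h.leaf_anc _ hm l a2), a6⟩
    have c2 := h.up_leaf hreg x
    have c3 := hE x
    have c4 := hup1 x
    simp only [Finset.mem_erase, Finset.mem_univ, and_true]
    by_cases e1 : x = r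
    · have n1 : x ∉ lvs r p := fun hh => c0 hh e1
      have n2 : x ∉ (lvs r p).image f := fun hh => (c1 hh).1 e1
      have n3 : x ∉ E := fun hh => (c3 hh).1 e1
      rw [if_neg (not_not.2 e1), if_neg n1, if_neg n2, if_neg n3]
      omega
    · have c4 := c4 e1
      by_cases e2 : x ∈ lvs r p
      · have c2 := c2 e2
        have : x ∉ (lvs r p).image f := fun hh => (c1 hh).2.1 e2
        have : x ∉ E := fun hh => (c3 hh).2.1 e2
        rw [if_pos e1, if_pos e2, if_neg ‹x ∉ (lvs r p).image f›, if_neg this, c2]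
      · by_cases e3 : x ∈ (lvs r p).image f
        · have : x ∉ E := fun hh => (c3 hh).2.2.1 e3
          have c1 := (c1 e3).2.2
          rw [if_pos e1, if_neg e2, if_pos e3, if_neg this]
          omega
        · by_cases e4 : x ∈ E
          · have := (c3 e4).2.2.2
            rw [if_pos e1, if_neg e2, if_neg e3, if_pos e4]
            omega
          · rw [if_pos e1, if_neg e2, if_neg e3, if_neg e4]
            omega
  refine ⟨by simpa using gen ∅ (by simp), ?_⟩
  intro x hx hxr hpx hxl hxf
  have := gen {x} (by
    intro y hy
    rw [Finset.mem_singleton] at hy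
    subst hy
    refine ⟨hx, hxl, ?_, h.two_le_up y r hx hxr (h.root_mem y) (Ne.symm hpx)⟩
    intro hm
    obtain ⟨l, hl, rfl⟩ := Finset.mem_image.1 hm
    obtain ⟨a1, a2, a3, a4, a5, a6⟩ := hf l hl
    exact hxf l hl ⟨a2, a3, a4⟩)
  rw [Finset.card_singleton] at this
  have hpos : 0 < Fintype.card V := Fintype.card_pos_iff.2 ⟨r⟩
  omega

end

section
variable {V : Type*} [Fintype V] [DecidableEq V] {G : SimpleGraph V} [DecidableRel G.Adj]
  {r : V} {p : V → V} {A : V → Finset V}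

theorem RDTree.path (h : RDTree G r p A) (v x : V) : v ∈ A x →
    ∃ Y : List V, Y.IsChain G.Adj ∧ Y.Nodup ∧ Y.head? = some v ∧ Y.getLast? = some x ∧
      ∀ y, y ∈ Y ↔ y ∈ A x ∧ v ∈ A y := by
  have base : ∃ Y : List V, Y.IsChain G.Adj ∧ Y.Nodup ∧ Y.head? = some v ∧ Y.getLast? = some v ∧
      ∀ y, y ∈ Y ↔ y ∈ A v ∧ v ∈ A y := by
    refine ⟨[v], by simp, by simp, by simp, by simp, ?_⟩
    intro y
    rw [List.mem_singleton]
    exact ⟨fun e => by subst e; exact ⟨h.self _, h.self _⟩, fun hh => h.anti _ _ hh.1 hh.2⟩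
  induction x using h.induct with
  | h0 =>
    intro hv
    rw [h.Ar, Finset.mem_singleton] at hv
    subst hv
    exact base
  | h1 x hx ih =>
    intro hv
    by_cases e : v = x
    · subst e; exact base
    have hv' := hv
    rw [h.Ax x hx, Finset.mem_insert] at hv
    obtain ⟨Y, h1, h2, h3, h4, h5⟩ := ih (hv.resolve_left e)
    refine ⟨Y ++ [x], ?_, ?_, ?_, by simp, ?_⟩
    · rw [List.isChain_append]
      refine ⟨h1, by simp, ?_⟩
      intro a ha b hb
      rw [h4] at ha
      simp only [Option.mem_def, Option.some.injEq, List.head?_cons] at ha hb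
      subst ha hb
      exact h.adj x hx
    · rw [List.nodup_append]
      refine ⟨h2, by simp, ?_⟩
      intro a ha b hb e
      rw [List.mem_singleton] at hb
      subst e hb
      exact h.xnot _ hx ((h5 _).1 ha).1
    · rw [List.head?_append, h3]; rfl
    · intro y
      rw [List.mem_append, List.mem_singleton, h5, h.Ax x hx, Finset.mem_insert]
      constructor
      · rintro (⟨a, b⟩ | rfl)
        · exact ⟨Or.inr a, b⟩
        · exact ⟨Or.inl rfl, hv'⟩
      · rintro ⟨rfl | a, b⟩
        · exact Or.inr rfl
        · exact Or.inl ⟨a, b⟩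

theorem RDTree.tail_path (h : RDTree G r p A) (l x : V) :
    ∃ b ∈ A l, ∃ Q : List V, (b :: Q).IsChain G.Adj ∧ Q.Nodup ∧ (b :: Q).getLast? = some x ∧
      ∀ y, y ∈ Q ↔ y ∈ A x ∧ y ∉ A l := by
  have base : ∀ x ∈ A l, ∃ b ∈ A l, ∃ Q : List V, (b :: Q).IsChain G.Adj ∧ Q.Nodup ∧
      (b :: Q).getLast? = some x ∧ ∀ y, y ∈ Q ↔ y ∈ A x ∧ y ∉ A l := by
    intro x hx
    refine ⟨x, hx, [], by simp, by simp, by simp, ?_⟩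
    intro y
    simp only [List.not_mem_nil, false_iff, not_and, not_not]
    exact fun hy => h.trans l x hx hy
  induction x using h.induct with
  | h0 => exact base r (h.root_mem l)
  | h1 x hx ih =>
    by_cases hxl : x ∈ A l
    · exact base x hxl
    obtain ⟨b, hb, Q, h1, h2, h3, h4⟩ := ih
    refine ⟨b, hb, Q ++ [x], ?_, ?_, ?_, ?_⟩
    · rw [← List.cons_append, List.isChain_append]
      refine ⟨h1, by simp, ?_⟩
      intro a ha c hc
      rw [h3] at ha
      simp only [Option.mem_def, Option.some.injEq, List.head?_cons] at ha hc
      subst ha hc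
      exact h.adj x hx
    · rw [List.nodup_append]
      refine ⟨h2, by simp, ?_⟩
      intro a ha b hb e
      rw [List.mem_singleton] at hb
      subst e hb
      exact h.xnot _ hx ((h4 _).1 ha).1
    · rw [← List.cons_append, List.getLast?_append]; simp
    · intro y
      rw [List.mem_append, List.mem_singleton, h4, h.Ax x hx, Finset.mem_insert]
      constructor
      · rintro (⟨a, b⟩ | rfl)
        · exact ⟨Or.inr a, b⟩
        · exact ⟨Or.inl rfl, hxl⟩
      · rintro ⟨rfl | a, b⟩
        · exact Or.inr rfl
        · exact Or.inl ⟨a, b⟩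

theorem RDTree.cyc (h : RDTree G r p A) (l : V)
    (hl : G.Adj l r ∨ ∃ v, v ≠ r ∧ v ∈ A l ∧ G.Adj (p v) l ∧ G.Adj v r) :
    ∃ C : List V, C.IsChain G.Adj ∧ C.Nodup ∧ (∀ y, y ∈ C ↔ y ∈ A l) ∧
      ∀ a ∈ C.getLast?, ∀ b ∈ C.head?, G.Adj a b := by
  rcases hl with hl | ⟨v, hv, hvl, hpl, hvr⟩
  · obtain ⟨Y, h1, h2, h3, h4, h5⟩ := h.path r l (h.root_mem l)
    refine ⟨Y, h1, h2, ?_, ?_⟩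
    · intro y
      rw [h5]
      exact ⟨fun hh => hh.1, fun hh => ⟨hh, h.root_mem y⟩⟩
    · intro a ha b hb
      rw [h4] at ha
      rw [h3] at hb
      simp only [Option.mem_def, Option.some.injEq] at ha hb
      subst ha hb
      exact hl
  · obtain ⟨X, h1, h2, h3, h4, h5⟩ := h.path r (p v) (h.root_mem _)
    obtain ⟨Y, g1, g2, g3, g4, g5⟩ := h.path v l hvl
    refine ⟨X ++ Y.reverse, ?_, ?_, ?_, ?_⟩
    · rw [List.isChain_append]
      refine ⟨h1, ?_, ?_⟩
      · rw [List.isChain_reverse]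
        simpa only [G.adj_comm] using g1
      · intro a ha b hb
        rw [List.head?_reverse, g4] at hb
        rw [h4] at ha
        simp only [Option.mem_def, Option.some.injEq] at ha hb
        subst ha hb
        exact hpl
    · rw [List.nodup_append]
      refine ⟨h2, List.nodup_reverse.2 g2, ?_⟩
      intro a ha b hb e
      subst e
      rw [List.mem_reverse, g5] at hb
      rw [h5] at ha
      exact h.xnot v hv (h.trans _ _ ha.1 hb.2)
    · intro y
      rw [List.mem_append, List.mem_reverse, h5, g5]
      have hpv : p v ∈ A l := h.trans l v hvl (h.parent_mem v hv)
      constructor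
      · rintro (⟨a, -⟩ | ⟨a, -⟩)
        · exact h.trans l _ hpv a
        · exact a
      · intro hy
        rcases h.chain l y hy v hvl with h6 | h6
        · rw [h.Ax v hv, Finset.mem_insert] at h6
          rcases h6 with rfl | h6
          · exact Or.inr ⟨hy, h.self _⟩
          · exact Or.inl ⟨h6, h.root_mem y⟩
        · exact Or.inr ⟨hy, h6⟩
    · intro a ha b hb
      rw [List.getLast?_append, List.getLast?_reverse, g3] at ha
      rw [List.head?_append, h3] at hb
      simp only [Option.mem_def, Option.some_or, Option.some.injEq] at ha hb
      subst ha hb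
      exact hvr

theorem RDTree.ham (h : RDTree G r p A) (l l' : V) (hall : ∀ y, y ∈ A l ∨ y ∈ A l')
    (hl : G.Adj l r ∨ ∃ v, v ≠ r ∧ v ∈ A l ∧ G.Adj (p v) l ∧ G.Adj v r) :
    ∃ T : SimpleGraph V, T ≤ G ∧ T.IsTree ∧ {v : V | (T.neighborSet v).ncard = 1}.ncard ≤ 2 := by
  obtain ⟨C, c1, c2, c3, c4⟩ := h.cyc l hl
  obtain ⟨b, hb, Q, q1, q2, -, q3⟩ := h.tail_path l l'
  obtain ⟨C1, C2, rfl⟩ := List.append_of_mem ((c3 b).2 hb)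
  have hperm : ∀ y, y ∈ C2 ++ (C1 ++ [b]) ↔ y ∈ C1 ++ b :: C2 := by
    intro y; simp only [List.mem_append, List.mem_cons, List.not_mem_nil, or_false]; tauto
  have hp : (C1 ++ b :: C2).Perm (C2 ++ (C1 ++ [b])) := by
    have : C1 ++ b :: C2 = (C1 ++ [b]) ++ C2 := by simp
    rw [this]
    exact List.perm_append_comm
  refine tree_of_list G ((C2 ++ (C1 ++ [b])) ++ Q) (by simp) ?_ ?_ ?_
  · rw [List.isChain_split] at c1
    rw [List.isChain_append]
    refine ⟨?_, q1.tail, ?_⟩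
    · rw [List.isChain_append]
      refine ⟨c1.2.tail, c1.1, ?_⟩
      intro x hx y hy
      apply c4
      · rw [List.getLast?_append, List.getLast?_cons]
        simp only [Option.mem_def] at hx
        simp [hx]
      · simp only [Option.mem_def, List.head?_append] at hy ⊢
        simpa using hy
    · intro x hx y hy
      have : x = b := by
        simp only [Option.mem_def] at hx
        rw [← List.append_assoc, List.getLast?_append] at hx
        simpa using hx.symm
      subst this
      exact (List.isChain_cons.1 q1).1 y hy
  · rw [List.nodup_append]
    refine ⟨hp.nodup_iff.1 c2, q2, ?_⟩
    intro x hx y hy e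
    subst e
    rw [hperm, c3] at hx
    exact ((q3 x).1 hy).2 hx
  · intro y
    rw [List.mem_append, hperm, c3, q3]
    have := hall y
    tauto

theorem RDTree.exists_leaf (h : RDTree G r p A) (hn : 2 ≤ Fintype.card V) (y : V) :
    ∃ l ∈ lvs r p, y ∈ A l := by
  obtain ⟨z, hz, hmax⟩ := Finset.exists_max_image (Finset.univ.filter (fun z => y ∈ A z))
    (fun z => (A z).card) ⟨y, by simpa using h.self y⟩
  simp only [Finset.mem_filter, Finset.mem_univ, true_and] at hz hmax
  have hch : ∀ w, w ≠ r → p w ≠ z := by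
    intro w hw e
    have h1 := h.card_lt w hw
    have h2 := hmax w (h.trans w (p w) (h.parent_mem w hw) (by rw [e]; exact hz))
    rw [e] at h1
    omega
  refine ⟨z, ?_, hz⟩
  simp only [lvs, Finset.mem_filter, Finset.mem_univ, true_and]
  refine ⟨?_, hch⟩
  rintro rfl
  obtain ⟨w, hw⟩ := Fintype.exists_ne_of_one_lt_card (by omega) z
  obtain ⟨y, h1, h2, -⟩ := h.child z w (h.root_mem w) hw.symm
  exact hch y h1 h2

end

/-- Let `G` be a finite connected `3`-regular simple graph on `n ≥ 8` vertices. Then `G` has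
a spanning tree with at most `⌊(2n + 4)/9⌋` leaves. -/
theorem stmt_2 {V : Type*} [Fintype V] (G : SimpleGraph V) [DecidableRel G.Adj]
    (hG : G.Connected) (hreg : ∀ v : V, G.degree v = 3)
    (hn : 8 ≤ Fintype.card V) :
    ∃ T : SimpleGraph V, T ≤ G ∧ T.IsTree ∧
      {v : V | (T.neighborSet v).ncard = 1}.ncard ≤ (2 * Fintype.card V + 4) / 9 := by
  classical
  obtain ⟨r⟩ : Nonempty V := Fintype.card_pos_iff.1 (by omega)
  obtain ⟨p, A, h⟩ := rdtree_exists G hG hreg r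
  obtain ⟨hc1, hc2⟩ := h.count hreg
  have heven := h.sum_up hreg
  obtain ⟨T, t1, t2, t3, t4⟩ := tree_of_parent G r p (fun x => (A x).card) h.adj h.card_lt
  have hsub : ∀ x ∈ {v : V | (T.neighborSet v).ncard = 1}, x ≠ r → x ∈ lvs r p := by
    intro x hx hxr
    simp only [lvs, Finset.mem_filter, Finset.mem_univ, true_and]
    exact ⟨hxr, t3 x hxr hx⟩
  by_cases hr : (T.neighborSet r).ncard = 1
  · have hle : {v : V | (T.neighborSet v).ncard = 1}.ncard ≤ (lvs r p).card + 1 := by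
      have hs : {v : V | (T.neighborSet v).ncard = 1} ⊆ ((insert r (lvs r p) : Finset V) : Set V) := by
        intro x hx
        rw [Finset.mem_coe, Finset.mem_insert]
        by_cases e : x = r
        · exact Or.inl e
        · exact Or.inr (hsub x hx e)
      have := Set.ncard_le_ncard hs (Set.toFinite _)
      rw [Set.ncard_coe_finset] at this
      exact this.trans (Finset.card_insert_le _ _)
    by_cases hbad : Fintype.card V = 10 ∧ (lvs r p).card = 2
    · obtain ⟨h10, hL⟩ := hbad
      have hx : ∃ x, G.Adj x r ∧ p x ≠ r := by
        by_contra hcon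
        push Not at hcon
        have h1 : 1 < (G.neighborFinset r).card := by
          rw [SimpleGraph.card_neighborFinset_eq_degree, hreg]; omega
        obtain ⟨a, ha, b, hb, hab⟩ := Finset.one_lt_card.1 h1
        rw [SimpleGraph.mem_neighborFinset] at ha hb
        exact hab (t4 hr a b ha.ne' hb.ne' (hcon a ha.symm) (hcon b hb.symm))
      obtain ⟨x, hxr, hpx⟩ := hx
      have hl : ∃ l ∈ lvs r p, G.Adj l r ∨ ∃ v, v ≠ r ∧ v ∈ A l ∧ G.Adj (p v) l ∧ G.Adj v r := by
        by_cases hxl : x ∈ lvs r p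
        · exact ⟨x, hxl, Or.inl hxr⟩
        · by_contra hcon
          have := hc2 x hxr.ne hxr hpx hxl (by
            intro l hl hh
            exact hcon ⟨l, hl, Or.inr ⟨x, hxr.ne, hh.1, hh.2.2, hxr⟩⟩)
          omega
      obtain ⟨l, hl, hl'⟩ := hl
      obtain ⟨l', hE⟩ : ∃ l', lvs r p = {l, l'} := by
        obtain ⟨a, b, -, e⟩ := Finset.card_eq_two.1 hL
        rw [e] at hl
        simp only [Finset.mem_insert, Finset.mem_singleton] at hl
        rcases hl with rfl | rfl
        · exact ⟨b, e⟩
        · exact ⟨a, by rw [e, Finset.pair_comm]⟩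
      obtain ⟨T', s1, s2, s3⟩ := h.ham l l' (by
        intro y
        obtain ⟨m, hm, hy⟩ := h.exists_leaf (by omega) y
        rw [hE] at hm
        simp only [Finset.mem_insert, Finset.mem_singleton] at hm
        rcases hm with rfl | rfl
        · exact Or.inl hy
        · exact Or.inr hy) hl'
      exact ⟨T', s1, s2, s3.trans (by omega)⟩
    · exact ⟨T, t1, t2, hle.trans (by omega)⟩
  · have hle : {v : V | (T.neighborSet v).ncard = 1}.ncard ≤ (lvs r p).card := by
      have hs : {v : V | (T.neighborSet v).ncard = 1} ⊆ ((lvs r p : Finset V) : Set V) := by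
        intro x hx
        exact hsub x hx (fun e => hr (e ▸ hx))
      have := Set.ncard_le_ncard hs (Set.toFinite _)
      rwa [Set.ncard_coe_finset] at this
    exact ⟨T, t1, t2, hle.trans (by omega)⟩
end

section
/- (Broersma–Tuinstra) Let k ≥ 2 be an integer and let G be a finite connected simple graph on n vertices. If for every pair of distinct nonadjacent vertices u, v of G one has deg(u) + deg(v) ≥ n − k + 1, then G has a spanning tree with at most k leaves. -/
open SimpleGraph

namespace BT

variable {V : Type*}

/-- The set of leaves. -/
def L (T : SimpleGraph V) : Set V := {v : V | (T.neighborSet v).ncard = 1}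

lemma mem_L {T : SimpleGraph V} {v : V} : v ∈ L T ↔ ∃ w, ∀ z, T.Adj v z ↔ z = w := by
  simp [L, Set.ncard_eq_one, Set.ext_iff]

lemma L_unique {T : SimpleGraph V} {v a b : V} (h : v ∈ L T) (ha : T.Adj v a) (hb : T.Adj v b) :
    a = b := by
  obtain ⟨w, hw⟩ := mem_L.1 h
  rw [(hw a).1 ha, (hw b).1 hb]

/-- The edge exchange. -/
def swap (T : SimpleGraph V) (a b u x : V) : SimpleGraph V :=
  T.deleteEdges {s(a, b)} ⊔ edge u x

lemma swap_adj {T : SimpleGraph V} {a b u x y z : V} (hux : u ≠ x) :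
    (swap T a b u x).Adj y z ↔ (T.Adj y z ∧ ¬ ((y = a ∧ z = b) ∨ (y = b ∧ z = a))) ∨
      ((y = u ∧ z = x) ∨ (y = x ∧ z = u)) := by
  simp only [swap, sup_adj, deleteEdges_adj, Set.mem_singleton_iff, edge_adj, Sym2.eq_iff]
  grind

lemma swap_isTree [Finite V] {T : SimpleGraph V} (hT : T.IsTree) {u x : V} (hux : u ≠ x)
    (p : T.Walk u x) (hp : p.IsPath) (a b : V) (hab : s(a, b) ∈ p.edges) :
    (swap T a b u x).IsTree := by
  have hnr : ¬ (T.deleteEdges {s(a, b)}).Reachable u x := by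
    intro h
    obtain ⟨q, hq⟩ := h.exists_isPath
    have hle : T.deleteEdges {s(a, b)} ≤ T := deleteEdges_le _
    have h1 := congrArg Walk.edges <| congrArg Subtype.val <|
      hT.isAcyclic.path_unique ⟨q.mapLe hle, hq.mapLe hle⟩ ⟨p, hp⟩
    simp only [Walk.mapLe, Walk.edges_map, Hom.coe_ofLE, Sym2.map_id, List.map_id_fun, id_eq] at h1
    rw [← h1] at hab
    have := q.adj_of_mem_edges hab
    simp at this
  have hac : (swap T a b u x).IsAcyclic :=
    IsAcyclic.sup_edge_of_not_reachable hnr (hT.isAcyclic.anti (deleteEdges_le _))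
  have := hT.connected.nonempty
  obtain ⟨F, hF1, -, hF⟩ := (connected_top (V := V)).exists_isTree_le_of_le_of_isAcyclic
    (le_top : swap T a b u x ≤ ⊤) hac
  have hTc := (isTree_iff_connected_and_card.1 hT).2
  have hFc := (isTree_iff_connected_and_card.1 hF).2
  have hE : (swap T a b u x).edgeSet = insert s(u, x) (T.edgeSet \ {s(a, b)}) := by
    rw [swap, edgeSet_sup, edgeSet_edge_of_ne hux, edgeSet_deleteEdges, Set.union_singleton]
  have hnm : s(u, x) ∉ T.edgeSet \ {s(a, b)} := by
    intro h
    apply hnr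
    rw [← edgeSet_deleteEdges] at h
    exact Adj.reachable h
  have hin : s(a, b) ∈ T.edgeSet := p.edges_subset_edgeSet hab
  have hcard : (swap T a b u x).edgeSet.ncard = T.edgeSet.ncard := by
    rw [hE, Set.ncard_insert_of_notMem hnm (Set.toFinite _),
      Set.ncard_diff_singleton_add_one hin (Set.toFinite _)]
  rw [Nat.card_coe_set_eq] at hTc hFc
  have heq : (swap T a b u x).edgeSet = F.edgeSet :=
    Set.eq_of_subset_of_ncard_le (edgeSet_subset_edgeSet.2 hF1) (by omega) (Set.toFinite _)
  rw [edgeSet_inj.1 heq]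
  exact hF

lemma inj {T : SimpleGraph V} {u v : V} {p : T.Walk u v} (hp : p.IsPath) {i j : ℕ}
    (hi : i ≤ p.length) (hj : j ≤ p.length) (h : p.getVert i = p.getVert j) : i = j :=
  hp.getVert_injOn hi hj h

lemma swap_le {G T : SimpleGraph V} (hTG : T ≤ G) {a b u x : V} (h : G.Adj u x) :
    swap T a b u x ≤ G :=
  sup_le ((deleteEdges_le _).trans hTG) ((edge_le_iff G).2 (Or.inr h))

/-- If leaves are minimum and at least 3, they are independent. -/
lemma indep [Finite V] {G T : SimpleGraph V} (hTG : T ≤ G) (hT : T.IsTree)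
    (hmin : ∀ S : SimpleGraph V, S ≤ G → S.IsTree → (L T).ncard ≤ (L S).ncard)
    (h3 : 3 ≤ (L T).ncard) {u v : V} (hu : u ∈ L T) (hv : v ∈ L T) (huv : u ≠ v) :
    ¬ G.Adj u v := by
  intro hadj
  obtain ⟨p, hp, -⟩ := hT.existsUnique_path u v
  have hpl : 0 < p.length := by
    by_contra h
    exact huv (Walk.eq_of_length_eq_zero (by omega : p.length = 0))
  obtain ⟨w, hw, hwuv⟩ : ∃ w ∈ L T, w ∉ ({u, v} : Set V) := by
    apply Set.exists_mem_notMem_of_ncard_lt_ncard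
    · have := Set.ncard_pair huv
      omega
    · exact Set.toFinite _
  have hwp : w ∉ p.support := by
    intro h
    obtain ⟨i, rfl, hi⟩ := Walk.mem_support_iff_exists_getVert.1 h
    have h0 : i ≠ 0 := by rintro rfl; simp at hwuv
    have h1 : i ≠ p.length := by rintro rfl; simp at hwuv
    have e1 := p.adj_getVert_succ (i := i) (by omega)
    have e2 := p.adj_getVert_succ (i := i - 1) (by omega)
    rw [Nat.sub_add_cancel (by omega)] at e2
    have := inj hp (by omega) (by omega) (L_unique hw e1 e2.symm)
    omega
  obtain ⟨q⟩ := hT.connected u w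
  obtain ⟨d, -, hd1, hd2⟩ := q.exists_boundary_dart {z | z ∈ p.support} p.start_mem_support hwp
  obtain ⟨⟨a, c⟩, hac⟩ := d
  simp only [Set.mem_setOf_eq] at hd1 hd2 hac
  obtain ⟨i, rfl, hi⟩ := Walk.mem_support_iff_exists_getVert.1 hd1
  have h0 : i ≠ 0 := by
    rintro rfl
    have e1 := p.adj_getVert_succ (i := 0) (by omega)
    rw [Walk.getVert_zero] at e1 hac
    exact hd2 (L_unique hu e1 hac ▸ p.getVert_mem_support _)
  have h1 : i ≠ p.length := by
    rintro rfl
    have e1 := p.adj_getVert_succ (i := p.length - 1) (by omega)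
    rw [Nat.sub_add_cancel (by omega)] at e1
    rw [Walk.getVert_length] at e1 hac
    exact hd2 (L_unique hv e1.symm hac ▸ p.getVert_mem_support _)
  have e1 := p.adj_getVert_succ (i := i) (by omega)
  have e2 := p.adj_getVert_succ (i := i - 1) (by omega)
  rw [Nat.sub_add_cancel (by omega)] at e2
  have hne : p.getVert (i-1) ≠ p.getVert (i+1) := fun h => by
    have := inj hp (by omega) (by omega) h
    omega
  have hiu : p.getVert i ≠ u := fun h => by
    replace h := h.trans p.getVert_zero.symm
    have := inj hp (by omega) (by omega) h
    omega
  have hiv : p.getVert i ≠ v := fun h => by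
    replace h := h.trans p.getVert_length.symm
    have := inj hp (by omega) (by omega) h
    omega
  have hi1u : p.getVert (i+1) ≠ u := fun h => by
    replace h := h.trans p.getVert_zero.symm
    have := inj hp (by omega) (by omega) h
    omega
  have hmem : s(p.getVert i, p.getVert (i+1)) ∈ p.edges :=
    (Walk.mk_mem_edges_iff_exists p).2 ⟨i, by omega, rfl⟩
  have hc1 : c ≠ p.getVert (i+1) := fun h => hd2 (h ▸ p.getVert_mem_support _)
  have hc2 : c ≠ p.getVert (i-1) := fun h => hd2 (h ▸ p.getVert_mem_support _)
  have hTuv : ¬ T.Adj u v := by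
    intro h
    have e1 := p.adj_getVert_succ (i := 0) (by omega)
    rw [Walk.getVert_zero] at e1
    have h' := L_unique hu e1 h
    replace h' := h'.trans p.getVert_length.symm
    have := inj hp (by omega) (by omega) h'
    omega
  generalize p.getVert i = a at *
  generalize hb : p.getVert (i+1) = b at *
  generalize p.getVert (i-1) = a' at *
  have hS := swap_isTree hT huv p hp a b hmem
  have hle := hmin _ (swap_le hTG hadj) hS
  have hsub : L (swap T a b u v) ⊆ insert b (L T \ {u, v}) := by
    intro y hy
    by_cases hyb : y = b
    · simp [hyb]
    have key : ∀ z z', (swap T a b u v).Adj y z → (swap T a b u v).Adj y z' → z = z' :=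
      fun z z' => L_unique hy
    simp only [swap_adj huv] at key
    right
    obtain ⟨wu, hwu⟩ := mem_L.1 hu
    obtain ⟨wv, hwv⟩ := mem_L.1 hv
    have hyu : y ≠ u := by
      rintro rfl
      have h' := (hwu wu).2 rfl
      have := key wu v (Or.inl ⟨h', by grind⟩) (by simp)
      exact hTuv (this ▸ h')
    have hyv : y ≠ v := by
      rintro rfl
      have h' := (hwv wv).2 rfl
      have := key wv u (Or.inl ⟨h', by grind⟩) (by simp)
      exact hTuv (this ▸ h').symm
    have hya : y ≠ a := by
      rintro rfl
      exact hc2 (key c a' (Or.inl ⟨hac, by grind⟩) (Or.inl ⟨e2.symm, by grind⟩))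
    refine ⟨?_, by simp [hyu, hyv]⟩
    obtain ⟨w, hw⟩ := mem_L.1 hy
    refine mem_L.2 ⟨w, fun z => ?_⟩
    rw [← hw z, swap_adj huv]
    grind
  have h5 := Set.ncard_le_ncard hsub (Set.toFinite _)
  have h6 := Set.ncard_insert_le b (L T \ {u, v})
  have h7 : (L T \ {u, v}).ncard = (L T).ncard - 2 := by
    rw [Set.ncard_diff (by grind), Set.ncard_pair huv]
  omega

/-- Exchange at the penultimate vertex. -/
lemma pen [Finite V] {G T : SimpleGraph V} (hTG : T ≤ G) (hT : T.IsTree)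
    (hmin : ∀ S : SimpleGraph V, S ≤ G → S.IsTree → (L T).ncard ≤ (L S).ncard)
    (h3 : 3 ≤ (L T).ncard) {u x : V} (hu : u ∈ L T) (hux : G.Adj u x)
    (p : T.Walk u x) (hp : p.IsPath) (h2 : 2 ≤ p.length) :
    (∀ z, T.Adj (p.getVert (p.length - 1)) z →
      z = x ∨ z = p.getVert (p.length - 2)) ∧
    ∀ v ∈ L T, v ≠ u → ¬ G.Adj v (p.getVert (p.length - 1)) ∧ p.getVert (p.length - 1) ≠ v := by
  have e1 := p.adj_getVert_succ (i := p.length - 1) (by omega)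
  have e2 := p.adj_getVert_succ (i := p.length - 2) (by omega)
  have q1 : p.length - 1 + 1 = p.length := by omega
  have q2 : p.length - 2 + 1 = p.length - 1 := by omega
  have hmem : s(p.getVert (p.length - 1), p.getVert (p.length - 1 + 1)) ∈ p.edges :=
    (Walk.mk_mem_edges_iff_exists p).2 ⟨_, by omega, rfl⟩
  rw [q1, Walk.getVert_length] at e1 hmem
  rw [q2] at e2
  have hau : p.getVert (p.length - 1) ≠ u := fun h => by
    replace h := h.trans p.getVert_zero.symm
    have := inj hp (by omega) (by omega) h
    omega
  have hcx : p.getVert (p.length - 2) ≠ x := fun h => by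
    replace h := h.trans p.getVert_length.symm
    have := inj hp (by omega) (by omega) h
    omega
  have hTux : ¬ T.Adj u x := by
    intro h
    have e1 := p.adj_getVert_succ (i := 0) (by omega)
    rw [Walk.getVert_zero] at e1
    have h' := L_unique hu e1 h
    replace h' := h'.trans p.getVert_length.symm
    have := inj hp (by omega) (by omega) h'
    omega
  have hne := hux.ne
  generalize p.getVert (p.length - 1) = a at *
  generalize p.getVert (p.length - 2) = c at *
  have hS := swap_isTree hT hne p hp a x hmem
  have hSG : swap T a x u x ≤ G := swap_le hTG hux
  have hle := hmin _ hSG hS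
  obtain ⟨wu, hwu⟩ := mem_L.1 hu
  have haL : a ∉ L T := fun h => hcx (L_unique h e2.symm e1)
  have hxS : x ∈ L (swap T a x u x) → x ∈ L T := by
    intro h
    obtain ⟨w, hw⟩ := mem_L.1 h
    have hwu' : u = w := (hw u).1 ((swap_adj hne).2 (by simp))
    refine mem_L.2 ⟨a, fun z => ⟨fun hz => ?_, fun hz => hz ▸ e1.symm⟩⟩
    by_contra hza
    have := (hw z).1 ((swap_adj hne).2 (Or.inl ⟨hz, by grind⟩))
    exact hTux ((this.trans hwu'.symm) ▸ hz).symm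
  have hsub : L (swap T a x u x) ⊆ insert a (L T \ {u}) := by
    intro y hy
    by_cases hya : y = a
    · simp [hya]
    right
    have hyu : y ≠ u := by
      rintro rfl
      have h' := (hwu wu).2 rfl
      have := L_unique hy ((swap_adj hne).2 (Or.inl ⟨h', by grind⟩))
        ((swap_adj (z := x) hne).2 (by simp))
      exact hTux (this ▸ h')
    refine ⟨?_, by simp [hyu]⟩
    by_cases hyx : y = x
    · subst hyx; exact hxS hy
    obtain ⟨w, hw⟩ := mem_L.1 hy
    refine mem_L.2 ⟨w, fun z => ?_⟩
    rw [← hw z, swap_adj hne]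
    grind
  have hcardu : (L T \ {u}).ncard + 1 = (L T).ncard :=
    Set.ncard_diff_singleton_add_one hu (Set.toFinite _)
  have haS : a ∈ L (swap T a x u x) := by
    by_contra h
    have : L (swap T a x u x) ⊆ L T \ {u} := fun y hy => by
      rcases hsub hy with rfl | h'
      · exact absurd hy h
      · exact h'
    have := Set.ncard_le_ncard this (Set.toFinite _)
    omega
  have h6 := Set.ncard_insert_le a (L T \ {u})
  have h5 := Set.ncard_le_ncard hsub (Set.toFinite _)
  have hcS : (swap T a x u x).Adj a c := (swap_adj hne).2 (Or.inl ⟨e2.symm, by grind⟩)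
  constructor
  · intro z hz
    by_contra! hzz
    exact hzz.2 (L_unique haS ((swap_adj hne).2 (Or.inl ⟨hz, by grind⟩)) hcS)
  · intro v hv hvu
    have hav : a ≠ v := fun h => haL (h ▸ hv)
    refine ⟨?_, hav⟩
    have hvS : v ∈ L (swap T a x u x) := by
      by_contra hvS
      have : L (swap T a x u x) ⊆ (insert a (L T \ {u})) \ {v} := fun y hy =>
        ⟨hsub hy, fun h => hvS (h ▸ hy)⟩
      have h7 := Set.ncard_le_ncard this (Set.toFinite _)
      have h8 : v ∈ insert a (L T \ {u}) := Or.inr ⟨hv, hvu⟩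
      have h9 := Set.ncard_diff_singleton_add_one h8 (Set.toFinite _)
      omega
    exact indep hSG hS (fun S h1 h2 => by have := hmin S h1 h2; omega) (by omega) hvS haS hav.symm

end BT

open BT
/-- (Broersma–Tuinstra) Let `k ≥ 2` and let `G` be a finite connected simple graph on `n`
vertices. If every pair of distinct nonadjacent vertices `u, v` satisfies
`deg u + deg v ≥ n - k + 1`, then `G` has a spanning tree with at most `k` leaves. -/
theorem stmt_4 {V : Type*} [Fintype V] (G : SimpleGraph V) [DecidableRel G.Adj]
    (hG : G.Connected) (k : ℕ) (hk : 2 ≤ k)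
    (hdeg : ∀ u v : V, u ≠ v → ¬ G.Adj u v →
      Fintype.card V - k + 1 ≤ G.degree u + G.degree v) :
    ∃ T : SimpleGraph V, T ≤ G ∧ T.IsTree ∧
      {v : V | (T.neighborSet v).ncard = 1}.ncard ≤ k := by
  classical
  obtain ⟨T, ⟨hTG, hT⟩, hmin'⟩ := Set.exists_min_image {S : SimpleGraph V | S ≤ G ∧ S.IsTree}
    (fun S => (L S).ncard) (Set.toFinite _) hG.exists_isTree_le
  have hmin : ∀ S : SimpleGraph V, S ≤ G → S.IsTree → (L T).ncard ≤ (L S).ncard :=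
    fun S h1 h2 => hmin' S ⟨h1, h2⟩
  refine ⟨T, hTG, hT, ?_⟩
  change (L T).ncard ≤ k
  by_contra! hlt
  have h3 : 3 ≤ (L T).ncard := by omega
  obtain ⟨u, hu, v, hv, huv⟩ := (Set.one_lt_ncard (Set.toFinite _)).1 (by omega : 1 < (L T).ncard)
  have hnadj := indep hTG hT hmin h3 hu hv huv
  have hd := hdeg u v huv hnadj
  choose p hp hpu using fun x => hT.existsUnique_path u x
  let f : V → V := fun x => (p x).getVert ((p x).length - 1)
  have hpos : ∀ x, G.Adj u x → 1 ≤ (p x).length := by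
    intro x hx
    by_contra h
    exact hx.ne (Walk.eq_of_length_eq_zero (by omega : (p x).length = 0))
  have hfadj : ∀ x, G.Adj u x → T.Adj (f x) x := by
    intro x hx
    have h1 := hpos x hx
    have e1 := (p x).adj_getVert_succ (i := (p x).length - 1) (by omega)
    rwa [Nat.sub_add_cancel h1, Walk.getVert_length] at e1
  have hone : ∀ x, G.Adj u x → (p x).length < 2 → f x = u := by
    intro x hx h
    have : (p x).length - 1 = 0 := by omega
    simp [f, this]
  have htwo : ∀ x, G.Adj u x → 2 ≤ (p x).length → f x ≠ u := by
    intro x hx h2 h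
    replace h := h.trans (p x).getVert_zero.symm
    have := inj (hp x) (by omega) (by omega) h
    omega
  have hpen : ∀ x, 2 ≤ (p x).length → 
      (p x).getVert ((p x).length - 2) = (p (f x)).getVert ((p (f x)).length - 1) := by
    intro x h2
    have h := hpu (f x) ((p x).take ((p x).length - 1)) ((hp x).take _)
    change _ = f (f x)
    simp only [f] at h ⊢
    rw [← h]
    have hq : (p x).length - 1 - 1 = (p x).length - 2 := by omega
    simp
    rw [hq]
  have hfinj : Set.InjOn f {x | G.Adj u x} := by
    intro x hx y hy hxy
    simp only [Set.mem_setOf_eq] at hx hy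
    by_cases h1 : (p x).length < 2
    · have hfx := hone x hx h1
      exact L_unique hu (hfx ▸ hfadj x hx) (hfx ▸ hxy ▸ hfadj y hy)
    by_cases h2 : (p y).length < 2
    · have hfx := hone y hy h2
      exact L_unique hu (hfx ▸ hxy ▸ hfadj x hx) (hfx ▸ hfadj y hy)
    push Not at h1 h2
    have hc : (p x).getVert ((p x).length - 2) = (p y).getVert ((p y).length - 2) := by
      rw [hpen x h1, hpen y h2, hxy]
    have := (pen hTG hT hmin h3 hu hx (p x) (hp x) h1).1 y (by
      change T.Adj (f x) y
      rw [hxy]; exact hfadj y hy)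
    rcases this with h | h
    · exact h.symm
    · exfalso
      rw [hc] at h
      replace h := (p y).getVert_length.trans h
      have := inj (hp y) (by omega) (by omega) h
      omega
  have hfL : ∀ x, G.Adj u x → ∀ w ∈ L T, w ≠ u → ¬ G.Adj w (f x) ∧ f x ≠ w := by
    intro x hx w hw hwu
    by_cases h1 : (p x).length < 2
    · rw [hone x hx h1]
      exact ⟨indep hTG hT hmin h3 hw hu hwu, hwu.symm⟩
    · exact (pen hTG hT hmin h3 hu hx (p x) (hp x) (by omega)).2 w hw hwu
  have hdisj1 : Disjoint ((G.neighborFinset u).image f) (G.neighborFinset v) := by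
    rw [Finset.disjoint_left]
    intro y hy hy'
    simp only [Finset.mem_image, mem_neighborFinset] at hy hy'
    obtain ⟨x, hx, rfl⟩ := hy
    exact (hfL x hx v hv huv.symm).1 hy'
  have hdisj2 : Disjoint ((G.neighborFinset u).image f ∪ G.neighborFinset v)
      ((L T).toFinset.erase u) := by
    rw [Finset.disjoint_left]
    intro y hy hy'
    simp only [Finset.mem_union, Finset.mem_image, mem_neighborFinset, Finset.mem_erase,
      Set.mem_toFinset] at hy hy'
    rcases hy with ⟨x, hx, rfl⟩ | hy
    · exact (hfL x hx _ hy'.2 hy'.1).2 rfl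
    · exact indep hTG hT hmin h3 hv hy'.2 hy.ne hy
  have hc := Finset.card_le_univ
    (((G.neighborFinset u).image f ∪ G.neighborFinset v) ∪ (L T).toFinset.erase u)
  rw [Finset.card_union_of_disjoint hdisj2, Finset.card_union_of_disjoint hdisj1,
    Finset.card_image_of_injOn (by intro x hx y hy; exact hfinj (by simpa using hx) (by simpa using hy)),
    Finset.card_erase_of_mem (by simpa using hu), card_neighborFinset_eq_degree,
    card_neighborFinset_eq_degree, ← Set.ncard_eq_toFinset_card'] at hc
  omega
end

section
/- (Win) Let k ≥ 2 and m ≥ 1 be integers and let G be a finite m-connected simple graph. If the independence number α(G) satisfies α(G) ≤ m + k − 1, then G has a spanning tree with at most k leaves. -/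
set_option linter.unusedSectionVars false

namespace WinProof

variable {V : Type*} [Fintype V] [DecidableEq V]

/-- pairwise nonadjacent -/
def Ind (G : SimpleGraph V) (s : Finset V) : Prop :=
  (s : Set V).Pairwise fun u v => ¬ G.Adj u v

open Classical in
/-- independence number of the subgraph induced on `U` -/
noncomputable def al (G : SimpleGraph V) (U : Finset V) : ℕ :=
  (U.powerset.filter (fun s => Ind G s)).sup Finset.card

theorem le_al {G : SimpleGraph V} {U s : Finset V} (h : s ⊆ U) (hs : Ind G s) :
    s.card ≤ al G U := by
  classical
  unfold al
  exact Finset.le_sup (f := Finset.card) (by simp [h, hs])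

theorem exists_al (G : SimpleGraph V) (U : Finset V) :
    ∃ s, s ⊆ U ∧ Ind G s ∧ s.card = al G U := by
  classical
  unfold al
  have hne : (U.powerset.filter (fun s => Ind G s)).Nonempty :=
    ⟨∅, Finset.mem_filter.2 ⟨by simp, by simp [Ind]⟩⟩
  obtain ⟨s, hs, h⟩ := Finset.exists_mem_eq_sup _ hne Finset.card
  simp at hs
  exact ⟨s, hs.1, hs.2, h.symm⟩

theorem al_mono {G : SimpleGraph V} {U W : Finset V} (h : U ⊆ W) : al G U ≤ al G W := by
  obtain ⟨s, h1, h2, h3⟩ := exists_al G U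
  rw [← h3]
  exact le_al (h1.trans h) h2

theorem Ind.mono {G : SimpleGraph V} {s t : Finset V} (h : Ind G t) (hst : s ⊆ t) : Ind G s :=
  Set.Pairwise.mono (by exact_mod_cast hst) h

theorem al_union_le (G : SimpleGraph V) (A B : Finset V) :
    al G (A ∪ B) ≤ al G A + al G B := by
  obtain ⟨s, h1, h2, h3⟩ := exists_al G (A ∪ B)
  rw [← h3]
  have e1 : (s ∩ A).card ≤ al G A := le_al Finset.inter_subset_right (h2.mono Finset.inter_subset_left)
  have e2 : (s ∩ B).card ≤ al G B := le_al Finset.inter_subset_right (h2.mono Finset.inter_subset_left)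
  have e3 : s = (s ∩ A) ∪ (s ∩ B) := by
    rw [← Finset.inter_union_distrib_left]
    exact (Finset.inter_eq_left.2 h1).symm
  have := Finset.card_union_le (s ∩ A) (s ∩ B)
  rw [← e3] at this
  omega

theorem al_union_eq {G : SimpleGraph V} {A B : Finset V} (hd : Disjoint A B)
    (hn : ∀ a ∈ A, ∀ b ∈ B, ¬ G.Adj a b) :
    al G (A ∪ B) = al G A + al G B := by
  refine le_antisymm (al_union_le G A B) ?_
  obtain ⟨s, h1, h2, h3⟩ := exists_al G A
  obtain ⟨t, k1, k2, k3⟩ := exists_al G B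
  rw [← h3, ← k3, ← Finset.card_union_of_disjoint (Finset.disjoint_of_subset_left h1
    (Finset.disjoint_of_subset_right k1 hd))]
  refine le_al (Finset.union_subset_union h1 k1) ?_
  intro u hu v hv huv hadj
  simp only [Finset.coe_union, Set.mem_union, Finset.mem_coe] at hu hv
  rcases hu with hu | hu <;> rcases hv with hv | hv
  · exact h2 hu hv huv hadj
  · exact hn _ (h1 hu) _ (k1 hv) hadj
  · exact hn _ (h1 hv) _ (k1 hu) hadj.symm
  · exact k2 hu hv huv hadj

theorem al_pos {G : SimpleGraph V} {A : Finset V} (h : A.Nonempty) : 1 ≤ al G A := by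
  obtain ⟨a, ha⟩ := h
  have := le_al (G := G) (U := A) (s := {a}) (by simpa using ha) (by simp [Ind])
  simpa using this

theorem al_empty (G : SimpleGraph V) : al G ∅ = 0 := by
  obtain ⟨s, h1, h2, h3⟩ := exists_al G ∅
  rw [← h3]; simp at h1; simp [h1]

/-! ### growing trees -/

/-- trees grown from the root `r`, with vertex set `W` and set of childless vertices `L` -/
inductive Built (G : SimpleGraph V) (r : V) : Finset V → Finset V → Prop
  | single : Built G r {r} {r}
  | add {W L : Finset V} {u v : V} : Built G r W L → u ∈ W → v ∉ W → G.Adj u v →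
      Built G r (insert v W) (insert v (L.erase u))

theorem Built.sub {G : SimpleGraph V} {r : V} {W L : Finset V} (h : Built G r W L) :
    L ⊆ W ∧ r ∈ W := by
  induction h with
  | single => simp
  | add h hu hv ha ih =>
    refine ⟨?_, by simp [ih.2]⟩
    intro x hx
    simp only [Finset.mem_insert, Finset.mem_erase] at hx ⊢
    rcases hx with hx | hx
    · exact Or.inl hx
    · exact Or.inr (ih.1 hx.2)

theorem Built.graph {G : SimpleGraph V} {r : V} {W L : Finset V} (h : Built G r W L) :
    ∃ T : SimpleGraph V, T ≤ G ∧ T.IsAcyclic ∧ (∀ u v, T.Adj u v → u ∈ W ∧ v ∈ W) ∧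
      (∀ v ∈ W, T.Reachable r v) ∧
      (∀ v ∈ W, v ≠ r → ∃ a, T.Adj v a) ∧
      (∀ v ∈ W, v ∉ L → v ≠ r → ∃ a b, a ≠ b ∧ T.Adj v a ∧ T.Adj v b) := by
  induction h with
  | single =>
    refine ⟨⊥, bot_le, SimpleGraph.isAcyclic_bot, by simp, ?_, ?_, ?_⟩ <;> simp
  | @add W L u v h hu hv ha ih =>
    obtain ⟨T, h1, h2, h3, h4, h5, h6⟩ := ih
    have huv : u ≠ v := ha.ne
    have hle : T ≤ T ⊔ SimpleGraph.edge u v := le_sup_left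
    have hnew : (T ⊔ SimpleGraph.edge u v).Adj u v := by
      simp [SimpleGraph.edge_adj, huv]
    have hsub := h.sub
    have hvr : v ≠ r := fun e => hv (e ▸ hsub.2)
    refine ⟨T ⊔ SimpleGraph.edge u v, ?_, ?_, ?_, ?_, ?_, ?_⟩
    · refine sup_le h1 ?_
      rw [SimpleGraph.edge_le_iff]
      exact Or.inr ha
    · refine h2.sup_edge_of_not_reachable ?_
      intro hr
      obtain ⟨w⟩ := hr.symm
      cases w with
      | nil => exact hv hu
      | cons hadj _ => exact hv (h3 _ _ hadj).1
    · intro a b hab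
      simp only [SimpleGraph.sup_adj, SimpleGraph.edge_adj] at hab
      simp only [Finset.mem_insert]
      rcases hab with hab | ⟨⟨rfl, rfl⟩ | ⟨rfl, rfl⟩, -⟩
      · exact ⟨Or.inr (h3 _ _ hab).1, Or.inr (h3 _ _ hab).2⟩
      · simp [hu]
      · simp [hu]
    · intro x hx
      rcases Finset.mem_insert.1 hx with rfl | hx
      · exact ((h4 u hu).mono hle).trans hnew.reachable
      · exact (h4 x hx).mono hle
    · intro x hx hxr
      rcases Finset.mem_insert.1 hx with rfl | hx
      · exact ⟨u, hnew.symm⟩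
      · obtain ⟨a, ha⟩ := h5 x hx hxr
        exact ⟨a, hle ha⟩
    · intro x hx hxL hxr
      simp only [Finset.mem_insert, Finset.mem_erase, not_or, not_and] at hxL hx
      have hx' : x ∈ W := hx.resolve_left hxL.1
      by_cases hxu : x = u
      · subst hxu
        obtain ⟨a, hxa⟩ := h5 x hx' hxr
        refine ⟨a, v, ?_, hle hxa, hnew⟩
        rintro rfl
        exact hv (h3 _ _ hxa).2
      · obtain ⟨a, b, hab, h7, h8⟩ := h6 x hx' (hxL.2 hxu) hxr
        exact ⟨a, b, hab, hle h7, hle h8⟩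

theorem Built.finish {G : SimpleGraph V} {r : V} {L : Finset V}
    (h : Built G r Finset.univ L) :
    ∃ T : SimpleGraph V, T ≤ G ∧ T.IsTree ∧
      {v : V | (T.neighborSet v).ncard = 1}.ncard ≤ L.card + 1 := by
  obtain ⟨T, h1, h2, -, h4, -, h6⟩ := h.graph
  refine ⟨T, h1, ⟨?_, h2⟩, ?_⟩
  · have : Nonempty V := ⟨r⟩
    exact ⟨fun a b => (h4 a (Finset.mem_univ _)).symm.trans (h4 b (Finset.mem_univ _))⟩
  · have : {v : V | (T.neighborSet v).ncard = 1} ⊆ ((insert r L : Finset V) : Set V) := by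
      intro v hv
      by_contra hcon
      simp only [Finset.coe_insert, Set.mem_insert_iff, Finset.mem_coe, not_or] at hcon
      obtain ⟨a, b, hab, ha, hb⟩ := h6 v (Finset.mem_univ _) hcon.2 hcon.1
      obtain ⟨c, hc⟩ := Set.ncard_eq_one.1 hv
      have e1 : a ∈ T.neighborSet v := ha
      have e2 : b ∈ T.neighborSet v := hb
      rw [hc] at e1 e2
      exact hab (e1.trans e2.symm)
    have h7 := Set.ncard_le_ncard this (Finset.finite_toSet _)
    rw [Set.ncard_coe_finset] at h7
    exact h7.trans (Finset.card_insert_le _ _)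

theorem Built.tip {G : SimpleGraph V} {r : V} (n : ℕ) (U0 : Finset V) : ∀ (N : ℕ) (W L : Finset V),
    (Finset.univ \ W).card ≤ N → Built G r W L →
    Finset.univ \ W ⊆ U0 → ∀ q ∈ L, q ∈ U0 → L.card + al G U0 ≤ n + 1 →
    ∃ W' L', W ⊆ W' ∧ Built G r W' L' ∧ L'.card + al G (Finset.univ \ W') ≤ n := by
  intro N
  induction N with
  | zero =>
    intro W L hN hB hU q hq hqU hn
    refine ⟨W, L, subset_rfl, hB, ?_⟩
    have : Finset.univ \ W = ∅ := Finset.card_eq_zero.1 (by omega)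
    rw [this, al_empty]
    have := al_pos (G := G) ⟨q, hqU⟩
    omega
  | succ N ih =>
    intro W L hN hB hU q hq hqU hn
    have hqW : q ∈ W := hB.sub.1 hq
    by_cases hz : ∃ z, z ∉ W ∧ G.Adj q z
    · obtain ⟨z, hzW, hqz⟩ := hz
      have hzU : z ∈ Finset.univ \ W := by simp [hzW]
      have hss : Finset.univ \ insert z W ⊆ Finset.univ \ W :=
        Finset.sdiff_subset_sdiff subset_rfl (Finset.subset_insert _ _)
      have hcard : (Finset.univ \ insert z W).card < (Finset.univ \ W).card := by
        refine Finset.card_lt_card ⟨hss, fun h => ?_⟩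
        have := h hzU
        simp at this
      have hLc : (insert z (L.erase q)).card ≤ L.card := by
        refine (Finset.card_insert_le _ _).trans ?_
        rw [Finset.card_erase_of_mem hq]
        have := Finset.card_pos.2 ⟨q, hq⟩
        omega
      obtain ⟨W', L', h1, h2, h3⟩ := ih (insert z W) (insert z (L.erase q)) (by omega)
        (hB.add hqW hzW hqz) (hss.trans hU) z (by simp) (hU hzU) (by omega)
      exact ⟨W', L', (Finset.subset_insert _ _).trans h1, h2, h3⟩
    · push Not at hz
      refine ⟨W, L, subset_rfl, hB, ?_⟩
      have hadd : al G ({q} ∪ (Finset.univ \ W)) = al G {q} + al G (Finset.univ \ W) := by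
        refine al_union_eq (by simp [hqW]) ?_
        intro a ha b hb
        simp at ha hb
        subst ha
        exact hz b hb
      have h1 := al_pos (G := G) (A := {q}) ⟨q, by simp⟩
      have h2 : al G ({q} ∪ (Finset.univ \ W)) ≤ al G U0 :=
        al_mono (Finset.union_subset (by simpa using hqU) hU)
      omega

theorem Built.extend {G : SimpleGraph V} (hG : G.Connected) {r : V} (n : ℕ) :
    ∀ (N : ℕ) (W L : Finset V),
    (Finset.univ \ W).card ≤ N → Built G r W L →
    L.card + al G (Finset.univ \ W) ≤ n →
    ∃ L', Built G r Finset.univ L' ∧ L'.card ≤ n := by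
  intro N
  induction N with
  | zero =>
    intro W L hN hB hn
    have h0 : Finset.univ \ W = ∅ := Finset.card_eq_zero.1 (by omega)
    have : W = Finset.univ := by
      apply Finset.eq_univ_of_forall
      intro x
      by_contra hx
      have : x ∈ Finset.univ \ W := by simp [hx]
      simp [h0] at this
    subst this
    exact ⟨L, hB, by omega⟩
  | succ N ih =>
    intro W L hN hB hn
    by_cases hW : W = Finset.univ
    · subst hW
      exact ⟨L, hB, by omega⟩
    have hstep : ∃ u z, u ∈ W ∧ z ∉ W ∧ G.Adj u z := by
      by_contra hcon
      push Not at hcon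
      apply hW
      apply Finset.eq_univ_of_forall
      intro x
      obtain ⟨w⟩ := hG.preconnected r x
      have : ∀ {a b : V} (w : G.Walk a b), a ∈ W → b ∈ W := by
        intro a b w
        induction w with
        | nil => exact id
        | cons hadj _ ih2 =>
          intro ha
          apply ih2
          by_contra hb
          exact hcon _ _ ha hb hadj
      exact this w hB.sub.2
    obtain ⟨u, z, hu, hz, ha⟩ := hstep
    have hzU : z ∈ Finset.univ \ W := by simp [hz]
    have hss : Finset.univ \ insert z W ⊆ Finset.univ \ W :=
      Finset.sdiff_subset_sdiff subset_rfl (Finset.subset_insert _ _)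
    have hcard : (Finset.univ \ insert z W).card < (Finset.univ \ W).card := by
      refine Finset.card_lt_card ⟨hss, fun h => ?_⟩
      have := h hzU
      simp at this
    have hLc : (insert z (L.erase u)).card ≤ L.card + 1 :=
      (Finset.card_insert_le _ _).trans (by
        have := Finset.card_erase_le (s := L) (a := u)
        omega)
    obtain ⟨W', L', h1, h2, h3⟩ := Built.tip n (Finset.univ \ W) N (insert z W)
      (insert z (L.erase u)) (by omega) (hB.add hu hz ha) hss z (by simp) hzU (by omega)
    refine ih W' L' ?_ h2 h3
    have : (Finset.univ \ W').card ≤ (Finset.univ \ insert z W).card :=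
      Finset.card_le_card (Finset.sdiff_subset_sdiff subset_rfl h1)
    omega

theorem Built.ofList {G : SimpleGraph V} : ∀ (l : List V) (b : V),
    (l ++ [b]).Nodup → (l ++ [b]).IsChain G.Adj →
    ∃ r, Built G r (l ++ [b]).toFinset {b} := by
  intro l
  induction l using List.reverseRecOn with
  | nil => intro b _ _; exact ⟨b, by simpa using Built.single⟩
  | append_singleton l a ih =>
    intro b hn hc
    obtain ⟨hc1, -, hc3⟩ := List.isChain_append.1 hc
    have hn1 : (l ++ [a]).Nodup := (List.nodup_append.1 hn).1
    have hb : b ∉ l ++ [a] := by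
      intro hb
      exact (List.nodup_append.1 hn).2.2 b hb b (by simp) rfl
    obtain ⟨r, h⟩ := ih a hn1 hc1
    have := h.add (u := a) (v := b) (by simp) (by simpa [and_comm] using hb) (hc3 a (by simp) b (by simp))
    refine ⟨r, ?_⟩
    convert this using 1
    · ext; simp; tauto
    · simp

end WinProof
namespace WinProof

variable {V : Type*} [Fintype V] [DecidableEq V]

/-! ### lists as paths -/

theorem exists_list_of_reachable {G : SimpleGraph V} {R : Finset V} {a b : V}
    (ha : a ∈ R) (hb : b ∈ R)
    (h : (G.induce (R : Set V)).Reachable ⟨a, ha⟩ ⟨b, hb⟩) :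
    ∃ Q : List V, Q.Nodup ∧ (∀ q ∈ Q, q ∈ R) ∧ Q.IsChain G.Adj ∧ Q.head? = some a ∧
      Q.getLast? = some b := by
  classical
  obtain ⟨p, hp⟩ := h.exists_isPath
  refine ⟨p.support.map Subtype.val, ?_, ?_, ?_, ?_, ?_⟩
  · exact (List.nodup_map_iff Subtype.val_injective).2 hp.support_nodup
  · intro q hq
    obtain ⟨x, -, rfl⟩ := List.mem_map.1 hq
    exact x.2
  · rw [List.isChain_map]
    exact p.isChain_adj_support
  · rw [List.head?_map, List.head?_eq_some_head p.support_ne_nil]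
    simp
  · rw [List.getLast?_map, List.getLast?_eq_some_getLast p.support_ne_nil]
    simp

/-- `u` and `w` are joined by an edge or by a path with all inner vertices in `R` -/
def Linked (G : SimpleGraph V) (R : Finset V) (u w : V) : Prop :=
  ∃ Q : List V, Q.Nodup ∧ (∀ q ∈ Q, q ∈ R) ∧ (u :: (Q ++ [w])).IsChain G.Adj

theorem exists_sep {G : SimpleGraph V} {R S T : Finset V}
    (hST : ∀ u ∈ S, ∀ w ∈ T, ¬ Linked G R u w) :
    ∃ C ⊆ R, (∀ a ∈ S ∪ C, ∀ b ∈ T ∪ (R \ C), ¬ G.Adj a b) := by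
  classical
  let p : V → Prop := fun r => ∃ u ∈ S, ∃ r0, ∃ h0 : r0 ∈ R, ∃ h1 : r ∈ R, G.Adj u r0 ∧
    (G.induce (R : Set V)).Reachable ⟨r0, h0⟩ ⟨r, h1⟩
  refine ⟨R.filter p, Finset.filter_subset _ _, ?_⟩
  intro a ha b hb hab
  simp only [Finset.mem_union, Finset.mem_filter, Finset.mem_sdiff, not_and] at ha hb
  rcases ha with ha | ⟨haR, u, hu, r0, h0, h1, hadj, hreach⟩
  · rcases hb with hb | ⟨hbR, hb⟩
    · exact hST a ha b hb ⟨[], by simp, by simp, by simpa using hab⟩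
    · exact hb hbR ⟨a, ha, b, hbR, hbR, hab, SimpleGraph.Reachable.refl _⟩
  · rcases hb with hb | ⟨hbR, hb⟩
    · obtain ⟨Q, q1, q2, q3, q4, q5⟩ := exists_list_of_reachable _ _ hreach
      refine hST u hu b hb ⟨Q, q1, q2, ?_⟩
      have e : u :: (Q ++ [b]) = [u] ++ (Q ++ [b]) := rfl
      rw [e, List.isChain_append, List.isChain_append]
      refine ⟨by simp, ⟨q3, by simp, ?_⟩, ?_⟩
      · simpa [q5] using hab
      · simpa [List.head?_append, q4] using hadj
    · refine hb hbR ⟨u, hu, r0, h0, hbR, hadj, hreach.trans ?_⟩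
      apply SimpleGraph.Adj.reachable
      simpa using hab

theorem al_modular {G : SimpleGraph V} {R S T : Finset V}
    (hRS : Disjoint R S) (hRT : Disjoint R T) (hd : Disjoint S T)
    (hST : ∀ u ∈ S, ∀ w ∈ T, ¬ Linked G R u w) :
    al G (R ∪ S ∪ T) + al G R = al G (R ∪ S) + al G (R ∪ T) := by
  obtain ⟨C, hC, hn⟩ := exists_sep hST
  have hdd : Disjoint (S ∪ C) (T ∪ (R \ C)) := by
    rw [Finset.disjoint_left] at *
    intro a ha hb
    simp only [Finset.mem_union, Finset.mem_sdiff] at ha hb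
    have := @hC a
    have := @hRS a
    have := @hRT a
    have := @hd a
    tauto
  have key : ∀ A B : Finset V, A ⊆ S ∪ C → B ⊆ T ∪ (R \ C) →
      al G (A ∪ B) = al G A + al G B := by
    intro A B hA hB
    refine al_union_eq (Finset.disjoint_of_subset_left hA (Finset.disjoint_of_subset_right hB hdd)) ?_
    intro a ha b hb
    exact hn a (hA ha) b (hB hb)
  have e1 : R ∪ S ∪ T = (S ∪ C) ∪ (T ∪ (R \ C)) := by
    ext x; have := @hC x; simp only [Finset.mem_union, Finset.mem_sdiff]; tauto
  have e2 : R = C ∪ (R \ C) := by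
    ext x; have := @hC x; simp only [Finset.mem_union, Finset.mem_sdiff]; tauto
  have e3 : R ∪ S = (S ∪ C) ∪ (R \ C) := by
    ext x; have := @hC x; simp only [Finset.mem_union, Finset.mem_sdiff]; tauto
  have e4 : R ∪ T = C ∪ (T ∪ (R \ C)) := by
    ext x; have := @hC x; simp only [Finset.mem_union, Finset.mem_sdiff]; tauto
  have k1 := key _ _ (subset_refl (S ∪ C)) (subset_refl (T ∪ (R \ C)))
  have k2 := key _ _ (Finset.subset_union_right : C ⊆ S ∪ C)
    (Finset.subset_union_right : R \ C ⊆ T ∪ (R \ C))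
  have k3 := key _ _ (subset_refl (S ∪ C)) (Finset.subset_union_right : R \ C ⊆ T ∪ (R \ C))
  have k4 := key _ _ (Finset.subset_union_right : C ⊆ S ∪ C) (subset_refl (T ∪ (R \ C)))
  rw [← e1] at k1
  rw [← e2] at k2
  rw [← e3] at k3
  rw [← e4] at k4
  omega

theorem exists_first {α : Type*} (p : α → Prop) : ∀ (L : List α), (∃ x ∈ L, p x) →
    ∃ L1 x L2, L = L1 ++ x :: L2 ∧ p x ∧ ∀ z ∈ L1, ¬ p z := by
  intro L
  induction L with
  | nil => simp
  | cons a L ih =>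
    intro h
    by_cases ha : p a
    · exact ⟨[], a, L, by simp, ha, by simp⟩
    · obtain ⟨x, hx, hpx⟩ := h
      have hxL : x ∈ L := by
        rcases List.mem_cons.1 hx with rfl | h
        · exact absurd hpx ha
        · exact h
      obtain ⟨L1, y, L2, e, h1, h2⟩ := ih ⟨x, hxL, hpx⟩
      refine ⟨a :: L1, y, L2, by simp [e], h1, ?_⟩
      intro z hz
      rcases List.mem_cons.1 hz with rfl | hz
      · exact ha
      · exact h2 z hz

theorem split_before {α : Type*} {y : α} : ∀ (pre B C rest : List α),
    pre ++ B = C ++ y :: rest → y ∉ pre →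
    ∃ M, C = pre ++ M ∧ B = M ++ y :: rest := by
  intro pre B C rest h hy
  rcases List.append_eq_append_iff.1 h with ⟨M, h1, h2⟩ | ⟨M, h1, h2⟩
  · exact ⟨M, h1, h2⟩
  · cases M with
    | nil => exact ⟨[], by simpa using h1.symm, by simpa using h2.symm⟩
    | cons a M =>
      simp at h2
      exfalso
      apply hy
      rw [h1, h2.1]
      simp

theorem exists_threshold (f : List V → ℕ) (n : ℕ) (h0 : f [] ≤ n) : ∀ (T : List V), n < f T →
    ∃ S s B, T = S ++ s :: B ∧ f S ≤ n ∧ n < f (S ++ [s]) := by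
  intro T
  induction T using List.reverseRecOn with
  | nil => intro h; omega
  | append_singleton T a ih =>
    intro h
    by_cases hT : n < f T
    · obtain ⟨S, s, B, e, h1, h2⟩ := ih hT
      exact ⟨S, s, B ++ [a], by simp [e], h1, h2⟩
    · exact ⟨T, a, [], rfl, by omega, h⟩

/-- a path `l` and a nonempty union `H` of components of `G - l`, chosen optimally -/
structure Opt (G : SimpleGraph V) (l : List V) (H : Finset V) : Prop where
  chain : l.IsChain G.Adj
  nodup : l.Nodup
  ne : H.Nonempty
  disj : ∀ h ∈ H, h ∉ l
  closed : ∀ h ∈ H, ∀ v, G.Adj h v → v ∈ H ∨ v ∈ l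
  min0 : ∀ l' : List V, l'.IsChain G.Adj → l'.Nodup →
    al G (Finset.univ \ l.toFinset) ≤ al G (Finset.univ \ l'.toFinset)
  min1 : ∀ (l' : List V) (H' : Finset V), l'.IsChain G.Adj → l'.Nodup → H'.Nonempty →
    (∀ h ∈ H', h ∉ l') → (∀ h ∈ H', ∀ v, G.Adj h v → v ∈ H' ∨ v ∈ l') →
    al G (Finset.univ \ l'.toFinset) ≤ al G (Finset.univ \ l.toFinset) → H.card ≤ H'.card

/-- the rest of the graph -/
def rest (l : List V) (H : Finset V) : Finset V := (Finset.univ \ l.toFinset) \ H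

theorem mem_rest {l : List V} {H : Finset V} {v : V} : v ∈ rest l H ↔ v ∉ l ∧ v ∉ H := by
  simp [rest]

theorem Opt.al_eq {G : SimpleGraph V} {l : List V} {H : Finset V} (o : Opt G l H) :
    al G (Finset.univ \ l.toFinset) = al G (rest l H) + al G H := by
  rw [← al_union_eq]
  · congr 1
    ext v
    have := o.disj v
    simp only [Finset.mem_union, mem_rest, Finset.mem_sdiff, Finset.mem_univ, List.mem_toFinset]
    tauto
  · rw [Finset.disjoint_left]
    intro a ha
    exact (mem_rest.1 ha).2
  · intro a ha b hb hab
    rw [mem_rest] at ha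
    rcases o.closed b hb a hab.symm with h | h
    · exact ha.2 h
    · exact ha.1 h

theorem Opt.exchange {G : SimpleGraph V} {l : List V} {H : Finset V} (o : Opt G l H)
    {l' : List V} {K : Finset V} (hc : l'.IsChain G.Adj) (hn : l'.Nodup)
    (hz : ∃ z ∈ l', z ∈ H) (hK : ∀ v ∈ l, v ∈ l' ∨ v ∈ K)
    (hal : al G (rest l H ∪ K) ≤ al G (rest l H))
    (hKH : ∀ v ∈ K, ∀ h ∈ H, ¬ G.Adj h v) : False := by
  have hs := o.al_eq
  have hsub : Finset.univ \ l'.toFinset ⊆ (rest l H ∪ K) ∪ (H \ l'.toFinset) := by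
    intro v hv
    simp only [Finset.mem_union, mem_rest, Finset.mem_sdiff, Finset.mem_univ, List.mem_toFinset,
      true_and] at hv ⊢
    have := hK v
    tauto
  have h1 : al G (Finset.univ \ l'.toFinset) ≤ al G (rest l H) + al G (H \ l'.toFinset) :=
    (al_mono hsub).trans ((al_union_le _ _ _).trans (by omega))
  have h2 : al G (H \ l'.toFinset) ≤ al G H := al_mono Finset.sdiff_subset
  by_cases hne : (H \ l'.toFinset).Nonempty
  · have h3 := o.min1 l' (H \ l'.toFinset) hc hn hne (by simp) ?_ (by omega)
    · obtain ⟨z, hz1, hz2⟩ := hz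
      have : (H \ l'.toFinset).card < H.card := by
        refine Finset.card_lt_card ⟨Finset.sdiff_subset, fun h => ?_⟩
        have := h hz2
        simp [hz1] at this
      omega
    · intro h hh v hv
      simp only [Finset.mem_sdiff, List.mem_toFinset] at hh ⊢
      rcases o.closed h hh.1 v hv with h4 | h4
      · tauto
      · rcases hK v h4 with h5 | h5
        · exact Or.inr h5
        · exact absurd hv (hKH v h5 h hh.1)
  · rw [Finset.not_nonempty_iff_eq_empty] at hne
    rw [hne, al_empty] at h1
    have := o.min0 l' hc hn
    have := al_pos (G := G) o.ne
    omega

theorem Opt.conn {G : SimpleGraph V} {l : List V} {H : Finset V} (o : Opt G l H)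
    {a b : V} (ha : a ∈ H) (hb : b ∈ H) :
    (G.induce (H : Set V)).Reachable ⟨a, ha⟩ ⟨b, hb⟩ := by
  classical
  let C := H.filter (fun v => ∃ h : v ∈ H, (G.induce (H : Set V)).Reachable ⟨a, ha⟩ ⟨v, h⟩)
  have hCH : C ⊆ H := Finset.filter_subset _ _
  have h1 : H.card ≤ C.card := by
    refine o.min1 l C o.chain o.nodup ⟨a, ?_⟩ (fun h hh => o.disj h (hCH hh)) ?_ le_rfl
    · simp [C, ha]
    · intro h hh v hv
      rcases o.closed h (hCH hh) v hv with h2 | h2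
      · left
        obtain ⟨h3, h4⟩ := (Finset.mem_filter.1 hh).2
        refine Finset.mem_filter.2 ⟨h2, h2, h4.trans ?_⟩
        apply SimpleGraph.Adj.reachable
        simpa using hv
      · exact Or.inr h2
  have h2 : C = H := Finset.eq_of_subset_of_card_le hCH h1
  rw [← h2] at hb
  obtain ⟨h3, h4⟩ := (Finset.mem_filter.1 hb).2
  exact h4

theorem Opt.bridge {G : SimpleGraph V} {l : List V} {H : Finset V} (o : Opt G l H)
    (A B : List V) (hA : ∀ x ∈ A.getLast?, ∃ h ∈ H, G.Adj h x)
    (hB : ∀ x ∈ B.head?, ∃ h ∈ H, G.Adj h x) :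
    ∃ Z : List V, Z.Nodup ∧ (∀ z ∈ Z, z ∈ H) ∧ Z.IsChain G.Adj ∧ (∃ z ∈ Z, z ∈ H) ∧
      (∀ x ∈ A.getLast?, ∀ z ∈ Z.head?, G.Adj x z) ∧
      (∀ z ∈ Z.getLast?, ∀ y ∈ B.head?, G.Adj z y) := by
  obtain ⟨h0, hh0⟩ := o.ne
  -- choose the ends of the connection
  have e1 : ∃ h ∈ H, ∀ y ∈ B.head?, G.Adj h y := by
    cases hb : B.head? with
    | none => exact ⟨h0, hh0, by simp⟩
    | some y =>
      obtain ⟨h, h1, h2⟩ := hB y (by simp [hb])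
      exact ⟨h, h1, by simpa using h2⟩
  have e2 : ∃ h ∈ H, ∀ x ∈ A.getLast?, G.Adj h x := by
    cases hb : A.getLast? with
    | none => exact ⟨h0, hh0, by simp⟩
    | some y =>
      obtain ⟨h, h1, h2⟩ := hA y (by simp [hb])
      exact ⟨h, h1, by simpa using h2⟩
  obtain ⟨b, hb, hb'⟩ := e1
  obtain ⟨a, ha, ha'⟩ := e2
  obtain ⟨Q, q1, q2, q3, q4, q5⟩ := exists_list_of_reachable ha hb (o.conn ha hb)
  refine ⟨Q, q1, q2, q3, ⟨a, List.mem_of_mem_head? q4, ha⟩, ?_, ?_⟩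
  · intro x hx z hz
    rw [q4] at hz
    simp at hz
    subst hz
    exact (ha' x hx).symm
  · intro z hz y hy
    rw [q5] at hz
    simp at hz
    subst hz
    exact hb' y hy

theorem Opt.segment {G : SimpleGraph V} {l : List V} {H : Finset V} (o : Opt G l H)
    (A T : List V) (hl : l = A ++ T) (hA : ∀ x ∈ A.getLast?, ∃ h ∈ H, G.Adj h x) :
    ∃ S s B, T = S ++ s :: B ∧ al G (rest l H ∪ S.toFinset) ≤ al G (rest l H) ∧
      al G (rest l H) < al G (rest l H ∪ (S ++ [s]).toFinset) ∧
      ∀ v ∈ S ++ [s], ∀ h ∈ H, ¬ G.Adj h v := by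
  classical
  have hsplit : ∃ T1 T2, T = T1 ++ T2 ∧ (∀ v ∈ T1, ∀ h ∈ H, ¬ G.Adj h v) ∧
      (∀ x ∈ T2.head?, ∃ h ∈ H, G.Adj h x) := by
    by_cases hex : ∃ x ∈ T, ∃ h ∈ H, G.Adj h x
    · obtain ⟨L1, x, L2, e, h1, h2⟩ := exists_first _ T hex
      refine ⟨L1, x :: L2, e, ?_, by simpa using h1⟩
      intro v hv h hh hadj
      exact h2 v hv ⟨h, hh, hadj⟩
    · push Not at hex
      exact ⟨T, [], by simp, hex, by simp⟩
  obtain ⟨T1, T2, hT, h1, h2⟩ := hsplit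
  have hbig : al G (rest l H) < al G (rest l H ∪ T1.toFinset) := by
    by_contra hcon
    push Not at hcon
    obtain ⟨Z, z1, z2, z3, z4, z5, z6⟩ := o.bridge A T2 hA h2
    have hl2 : l = A ++ (T1 ++ T2) := by rw [hl, hT]
    have hc := o.chain
    have hn := o.nodup
    have hd := o.disj
    rw [hl2] at hc hn hd
    refine o.exchange (l' := A ++ (Z ++ T2)) (K := T1.toFinset) ?_ ?_ ?_ ?_ hcon ?_
    · rw [List.isChain_append, List.isChain_append] at hc ⊢
      refine ⟨hc.1, ⟨z3, hc.2.1.2.1, z6⟩, ?_⟩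
      intro x hx y hy
      apply z5 x hx
      obtain ⟨z, hz, -⟩ := z4
      cases Z with
      | nil => simp at hz
      | cons c Z => simpa using hy
    · simp only [List.nodup_append, List.mem_append] at hn ⊢
      refine ⟨hn.1, ⟨z1, hn.2.1.2.1, ?_⟩, ?_⟩
      · rintro a ha b hb rfl
        exact hd a (z2 a ha) (by simp [hb])
      · rintro a ha b (hb | hb) rfl
        · exact hd a (z2 a hb) (by simp [ha])
        · exact hn.2.2 a ha a (Or.inr hb) rfl
    · obtain ⟨z, hz, hzH⟩ := z4
      exact ⟨z, by simp [hz], hzH⟩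
    · intro v hv
      rw [hl2] at hv
      simp only [List.mem_append, List.mem_toFinset] at hv ⊢
      tauto
    · intro v hv
      exact h1 v (by simpa using hv)
  obtain ⟨S, s, B, e, h3, h4⟩ := exists_threshold
    (fun L => al G (rest l H ∪ L.toFinset)) (al G (rest l H)) (by simp) T1 hbig
  refine ⟨S, s, B ++ T2, by simp [hT, e], h3, h4, ?_⟩
  intro v hv
  apply h1 v
  rw [e]
  simp at hv ⊢
  tauto

end WinProof
namespace WinProof

variable {V : Type*} [Fintype V] [DecidableEq V]

set_option maxHeartbeats 1000000 in
theorem Opt.pair {G : SimpleGraph V} {l : List V} {H : Finset V} (o : Opt G l H)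
    {A S₁ M S₂ B : List V} {s₁ y s₂ : V}
    (hl : l = A ++ ((S₁ ++ [s₁]) ++ (M ++ ([y] ++ ((S₂ ++ [s₂]) ++ B)))))
    (hA : ∀ x ∈ A.getLast?, ∃ h ∈ H, G.Adj h x)
    (hy : ∃ h ∈ H, G.Adj h y)
    (h₁ : al G (rest l H ∪ S₁.toFinset) ≤ al G (rest l H))
    (h₂ : al G (rest l H ∪ S₂.toFinset) ≤ al G (rest l H))
    (k₁ : ∀ v ∈ S₁ ++ [s₁], ∀ h ∈ H, ¬ G.Adj h v)
    (k₂ : ∀ v ∈ S₂ ++ [s₂], ∀ h ∈ H, ¬ G.Adj h v) :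
    ∀ u ∈ S₁ ++ [s₁], ∀ w ∈ S₂ ++ [s₂], ¬ Linked G (rest l H) u w := by
  by_contra hcon
  push Not at hcon
  obtain ⟨U1, u, U2, eU, ⟨w, hw, hlink⟩, hfirst⟩ :=
    exists_first (fun u => ∃ w ∈ S₂ ++ [s₂], Linked G (rest l H) u w) _ hcon
  obtain ⟨W1, W2, eW⟩ := List.append_of_mem hw
  have hU1 : ∀ v ∈ U1, v ∈ S₁ := by
    intro v hv
    have : (U1 ++ u :: U2).dropLast = S₁ := by rw [← eU]; simp
    rw [← this, List.dropLast_append_of_ne_nil (by simp)]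
    simp [hv]
  have hW1 : ∀ v ∈ W1, v ∈ S₂ := by
    intro v hv
    have : (W1 ++ w :: W2).dropLast = S₂ := by rw [← eW]; simp
    rw [← this, List.dropLast_append_of_ne_nil (by simp)]
    simp [hv]
  rw [eU, eW] at hl
  have hl2 : l = A ++ (U1 ++ ((u :: (U2 ++ M ++ [y])) ++ (W1 ++ (w :: (W2 ++ B))))) := by
    rw [hl]; simp
  obtain ⟨Z, z1, z2, z3, z4, z5, z6⟩ := o.bridge A [y] hA (by simpa using hy)
  obtain ⟨Q, q1, q2, q3⟩ := hlink
  have hc := o.chain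
  have hn := o.nodup
  have hd := o.disj
  have hr : ∀ v ∈ rest l H, v ∉ l ∧ v ∉ H := fun v hv => mem_rest.1 hv
  have hlmem : ∀ v, v ∈ l ↔ v ∈ A ∨ v ∈ U1 ∨ v ∈ u :: (U2 ++ M ++ [y]) ∨ v ∈ W1 ∨
      v ∈ w :: (W2 ++ B) := by
    intro v
    rw [hl2]
    simp only [List.mem_append]
  rw [hl2] at hc hn
  generalize hD : u :: (U2 ++ M ++ [y]) = D at *
  generalize hE : w :: (W2 ++ B) = E at *
  have hDlast : D.getLast? = some y := by rw [← hD]; simp [List.getLast?_cons]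
  have hDhead : D.head? = some u := by rw [← hD]; simp
  have hEhead : E.head? = some w := by rw [← hE]; simp
  simp only [List.isChain_append] at hc
  obtain ⟨cA, ⟨-, ⟨cD, ⟨-, cE, -⟩, -⟩, -⟩, -⟩ := hc
  simp only [List.nodup_append, List.mem_append] at hn
  obtain ⟨nA, ⟨nU, ⟨nD, ⟨nW, nE, nWE⟩, nDW⟩, nUD⟩, nAU⟩ := hn
  have e : u :: (Q ++ [w]) = [u] ++ (Q ++ [w]) := rfl
  rw [e, List.isChain_append, List.isChain_append] at q3
  obtain ⟨-, ⟨cQ, -, cQw⟩, cuQ⟩ := q3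
  have cQE : (Q ++ E).IsChain G.Adj := by
    rw [List.isChain_append]
    exact ⟨cQ, cE, by simpa [hEhead] using cQw⟩
  have hdisjS : Disjoint U1.toFinset W1.toFinset := by
    rw [Finset.disjoint_left]
    intro a ha hb
    simp only [List.mem_toFinset] at ha hb
    exact nUD a ha a (Or.inr (Or.inl hb)) rfl
  have mA : ∀ v ∈ A, v ∈ l := fun v hv => (hlmem v).2 (Or.inl hv)
  have mU : ∀ v ∈ U1, v ∈ l := fun v hv => (hlmem v).2 (Or.inr (Or.inl hv))
  have mD : ∀ v ∈ D, v ∈ l := fun v hv => (hlmem v).2 (Or.inr (Or.inr (Or.inl hv)))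
  have mW : ∀ v ∈ W1, v ∈ l := fun v hv =>
    (hlmem v).2 (Or.inr (Or.inr (Or.inr (Or.inl hv))))
  have mE : ∀ v ∈ E, v ∈ l := fun v hv =>
    (hlmem v).2 (Or.inr (Or.inr (Or.inr (Or.inr hv))))
  refine o.exchange (l' := A ++ (Z ++ (D.reverse ++ (Q ++ E)))) (K := U1.toFinset ∪ W1.toFinset)
    ?_ ?_ ?_ ?_ ?_ ?_
  · have c1 : (D.reverse ++ (Q ++ E)).IsChain G.Adj := by
      rw [List.isChain_append]
      refine ⟨?_, cQE, ?_⟩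
      · rw [List.isChain_reverse]
        exact cD.imp (fun a b h => h.symm)
      · intro a ha b hb
        rw [List.getLast?_reverse, hDhead] at ha
        simp at ha
        subst ha
        apply cuQ u (by simp) b
        rw [List.head?_append] at hb ⊢
        rw [hEhead] at hb
        simpa using hb
    have c2 : (Z ++ (D.reverse ++ (Q ++ E))).IsChain G.Adj := by
      rw [List.isChain_append]
      refine ⟨z3, c1, ?_⟩
      intro a ha b hb
      apply z6 a ha
      rw [List.head?_append, List.head?_reverse, hDlast] at hb
      simpa using hb
    rw [List.isChain_append]
    refine ⟨cA, c2, ?_⟩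
    intro a ha b hb
    apply z5 a ha
    obtain ⟨z, hz, -⟩ := z4
    cases Z with
    | nil => simp at hz
    | cons c Z => simpa using hb
  · simp only [List.nodup_append, List.mem_append, List.mem_reverse, List.nodup_reverse]
    refine ⟨nA, ⟨z1, ⟨nD, ⟨q1, nE, ?_⟩, ?_⟩, ?_⟩, ?_⟩
    · rintro a ha b hb rfl
      exact (hr a (q2 a ha)).1 (mE a hb)
    · rintro a ha b (hb | hb) rfl
      · exact (hr a (q2 a hb)).1 (mD a ha)
      · exact nDW a ha a (Or.inr hb) rfl
    · rintro a ha b hb rfl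
      have h3 := z2 a ha
      rcases hb with hb | hb | hb
      · exact hd a h3 (mD a hb)
      · exact (hr a (q2 a hb)).2 h3
      · exact hd a h3 (mE a hb)
    · rintro a ha b hb rfl
      rcases hb with hb | hb | hb | hb
      · exact hd a (z2 a hb) (mA a ha)
      · exact nAU a ha a (Or.inr (Or.inl hb)) rfl
      · exact (hr a (q2 a hb)).1 (mA a ha)
      · exact nAU a ha a (Or.inr (Or.inr (Or.inr hb))) rfl
  · obtain ⟨z, hz, hzH⟩ := z4
    exact ⟨z, by simp [hz], hzH⟩
  · intro v hv
    simp only [List.mem_append, List.mem_reverse, Finset.mem_union, List.mem_toFinset]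
    rcases (hlmem v).1 hv with h | h | h | h | h <;> simp only [h, true_or, or_true]
  · rw [← Finset.union_assoc]
    have hmod := al_modular (G := G) (R := rest l H) (S := U1.toFinset) (T := W1.toFinset) ?_ ?_
      hdisjS ?_
    · have a1 : al G (rest l H ∪ U1.toFinset) ≤ al G (rest l H ∪ S₁.toFinset) := by
        apply al_mono
        apply Finset.union_subset_union_right
        intro v hv
        simp only [List.mem_toFinset] at hv ⊢
        exact hU1 v hv
      have a2 : al G (rest l H ∪ W1.toFinset) ≤ al G (rest l H ∪ S₂.toFinset) := by
        apply al_mono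
        apply Finset.union_subset_union_right
        intro v hv
        simp only [List.mem_toFinset] at hv ⊢
        exact hW1 v hv
      omega
    · rw [Finset.disjoint_left]
      intro a ha hb
      simp only [List.mem_toFinset] at hb
      exact (hr a ha).1 (mU a hb)
    · rw [Finset.disjoint_left]
      intro a ha hb
      simp only [List.mem_toFinset] at hb
      exact (hr a ha).1 (mW a hb)
    · intro a ha b hb hab
      simp only [List.mem_toFinset] at ha hb
      exact hfirst a ha ⟨b, by simp [hW1 b hb], hab⟩
  · intro v hv
    simp only [Finset.mem_union, List.mem_toFinset] at hv
    rcases hv with hv | hv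
    · exact k₁ v (by simp [hU1 v hv])
    · exact k₂ v (by simp [hW1 v hv])

theorem Linked.symm {G : SimpleGraph V} {R : Finset V} {u w : V} (h : Linked G R u w) :
    Linked G R w u := by
  obtain ⟨Q, q1, q2, q3⟩ := h
  refine ⟨Q.reverse, by simpa using q1, by simpa using q2, ?_⟩
  have : w :: (Q.reverse ++ [u]) = (u :: (Q ++ [w])).reverse := by simp
  rw [this, List.isChain_reverse]
  exact q3.imp (fun a b h => h.symm)

/-- the prefix belonging to an index -/
def EndOK : Option V → List V → Prop
  | none, A => A = []
  | some x, A => ∃ A', A = A' ++ [x]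

theorem al_many {G : SimpleGraph V} {R : Finset V} {ι : Type*} [DecidableEq ι] (I : Finset ι)
    (Seg : ι → Finset V)
    (hR : ∀ i ∈ I, Disjoint R (Seg i))
    (hd : ∀ i ∈ I, ∀ j ∈ I, i ≠ j → Disjoint (Seg i) (Seg j))
    (hL : ∀ i ∈ I, ∀ j ∈ I, i ≠ j → ∀ u ∈ Seg i, ∀ w ∈ Seg j, ¬ Linked G R u w)
    (hb : ∀ i ∈ I, al G R < al G (R ∪ Seg i)) :
    al G R + I.card ≤ al G (R ∪ I.biUnion Seg) := by
  induction I using Finset.induction_on with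
  | empty => simp
  | insert a I ha ih =>
    have ih' := ih (fun i hi => hR i (Finset.mem_insert_of_mem hi))
      (fun i hi j hj => hd i (Finset.mem_insert_of_mem hi) j (Finset.mem_insert_of_mem hj))
      (fun i hi j hj => hL i (Finset.mem_insert_of_mem hi) j (Finset.mem_insert_of_mem hj))
      (fun i hi => hb i (Finset.mem_insert_of_mem hi))
    have hne : ∀ i ∈ I, i ≠ a := fun i hi e => ha (e ▸ hi)
    have ha' := Finset.mem_insert_self a I
    have hmod := al_modular (G := G) (R := R) (S := I.biUnion Seg) (T := Seg a) ?_ (hR a ha') ?_ ?_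
    · have e : R ∪ (insert a I).biUnion Seg = R ∪ I.biUnion Seg ∪ Seg a := by
        rw [Finset.biUnion_insert, Finset.union_assoc, Finset.union_comm (Seg a)]
      rw [e, Finset.card_insert_of_notMem ha]
      have := hb a ha'
      omega
    · rw [Finset.disjoint_biUnion_right]
      intro i hi
      exact hR i (Finset.mem_insert_of_mem hi)
    · rw [Finset.disjoint_biUnion_left]
      intro i hi
      exact hd i (Finset.mem_insert_of_mem hi) a ha' (hne i hi)
    · intro u hu w hw
      obtain ⟨i, hi, hui⟩ := Finset.mem_biUnion.1 hu
      exact hL i (Finset.mem_insert_of_mem hi) a ha' (hne i hi) u hui w hw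

theorem Opt.bound {G : SimpleGraph V} {l : List V} {H : Finset V} (o : Opt G l H) (m : ℕ)
    (hconn : ∀ S : Finset V, S.card < m → (G.induce ((S : Set V)ᶜ)).Connected) :
    al G (Finset.univ \ l.toFinset) + m + 1 ≤ al G Finset.univ := by
  classical
  let X : Finset V := l.toFinset.filter (fun x => ∃ h ∈ H, G.Adj h x)
  have hX : ∀ x, x ∈ X ↔ x ∈ l ∧ ∃ h ∈ H, G.Adj h x := by intro x; simp [X]
  have hseg : ∀ i ∈ Finset.insertNone X, ∃ A S s B, l = A ++ ((S ++ [s]) ++ B) ∧ EndOK i A ∧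
      (∀ x ∈ A.getLast?, ∃ h ∈ H, G.Adj h x) ∧
      al G (rest l H ∪ S.toFinset) ≤ al G (rest l H) ∧
      al G (rest l H) < al G (rest l H ∪ (S ++ [s]).toFinset) ∧
      ∀ v ∈ S ++ [s], ∀ h ∈ H, ¬ G.Adj h v := by
    intro i hi
    have : ∃ A T, l = A ++ T ∧ EndOK i A ∧ (∀ x ∈ A.getLast?, ∃ h ∈ H, G.Adj h x) := by
      cases i with
      | none => exact ⟨[], l, rfl, rfl, by simp⟩
      | some x =>
        have hx := (hX x).1 (by simpa using hi)
        obtain ⟨A, T, e⟩ := List.append_of_mem hx.1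
        exact ⟨A ++ [x], T, by simp [e], ⟨A, rfl⟩, by simpa using hx.2⟩
    obtain ⟨A, T, e, h1, h2⟩ := this
    obtain ⟨S, s, B, e2, h3, h4, h5⟩ := o.segment A T e h2
    exact ⟨A, S, s, B, by simp [e, e2], h1, h2, h3, h4, h5⟩
  have hVne : Nonempty V := ⟨o.ne.choose⟩
  choose! A S s B hl hE hA hlow hhigh hno using hseg
  let Seg : Option V → Finset V := fun i => (S i ++ [s i]).toFinset
  have hSegl : ∀ i ∈ Finset.insertNone X, ∀ v ∈ Seg i, v ∈ l := by
    intro i hi v hv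
    rw [hl i hi]
    simp only [Seg, List.mem_toFinset] at hv
    simp only [List.mem_append] at hv ⊢
    tauto
  -- ordered pairs of indices
  have hord : ∀ i ∈ Finset.insertNone X, ∀ j ∈ Finset.insertNone X, i ≠ j →
      (∃ C, A j = A i ++ C) →
      Disjoint (Seg i) (Seg j) ∧ ∀ u ∈ Seg i, ∀ w ∈ Seg j, ¬ Linked G (rest l H) u w := by
    rintro i hi j hj hij ⟨C, hC⟩
    -- the index `j` is a vertex
    have hCy : ∃ y C', j = some y ∧ C = C' ++ [y] := by
      have hEj := hE j hj
      have hEi := hE i hi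
      rcases List.eq_nil_or_concat C with rfl | ⟨C', y, rfl⟩
      · exfalso
        apply hij
        rw [List.append_nil] at hC
        rw [hC] at hEj
        cases i with
        | none =>
          cases j with
          | none => rfl
          | some y =>
            obtain ⟨A', e⟩ := hEj
            have : A none = [] := hEi
            rw [this] at e
            simp at e
        | some x =>
          obtain ⟨A'', e'⟩ := hEi
          cases j with
          | none =>
            have : A (some x) = [] := hEj
            rw [this] at e'
            simp at e'
          | some y =>
            obtain ⟨A', e⟩ := hEj
            rw [e'] at e
            have := (List.append_inj' e rfl).2
            simp at this
            rw [this]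
      · cases j with
        | none =>
          have : A none = [] := hEj
          rw [this] at hC
          simp at hC
        | some y' =>
          obtain ⟨A', e⟩ := hEj
          rw [hC] at e
          simp only [List.concat_eq_append, ← List.append_assoc] at e
          have := (List.append_inj' e rfl).2
          simp at this
          subst this
          exact ⟨y, C', rfl, by simp⟩
    obtain ⟨y, C', rfl, rfl⟩ := hCy
    have hyX := (hX y).1 (by simpa using hj)
    have e1 := hl i hi
    have e2 := hl (some y) hj
    have e3 : (S i ++ [s i]) ++ B i = C' ++ y :: ((S (some y) ++ [s (some y)]) ++ B (some y)) := by
      rw [e1, hC] at e2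
      simpa [List.append_assoc] using e2
    have hynot : y ∉ S i ++ [s i] := by
      intro hy
      obtain ⟨h, hh, hadj⟩ := hyX.2
      exact hno i hi y hy h hh hadj
    obtain ⟨M, hM, hB⟩ := split_before _ _ _ _ e3 hynot
    have e4 : l = A i ++ ((S i ++ [s i]) ++
        (M ++ ([y] ++ ((S (some y) ++ [s (some y)]) ++ B (some y))))) := by
      rw [hB] at e1
      exact e1
    constructor
    · have hn := o.nodup
      rw [e4] at hn
      rw [Finset.disjoint_left]
      intro a ha hb
      simp only [Seg, List.mem_toFinset] at ha hb
      have h1 := (List.nodup_append.1 (List.nodup_append.1 hn).2.1).2.2 a ha a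
      apply h1 _ rfl
      simp only [List.mem_append] at hb ⊢
      tauto
    · intro u hu w hw
      exact o.pair e4 (hA i hi) hyX.2 (hlow i hi) (hlow _ hj) (hno i hi) (hno _ hj) u
        (List.mem_toFinset.1 hu) w (List.mem_toFinset.1 hw)
  have hall : ∀ i ∈ Finset.insertNone X, ∀ j ∈ Finset.insertNone X, i ≠ j →
      Disjoint (Seg i) (Seg j) ∧ ∀ u ∈ Seg i, ∀ w ∈ Seg j, ¬ Linked G (rest l H) u w := by
    intro i hi j hj hij
    have e : A i ++ ((S i ++ [s i]) ++ B i) = A j ++ ((S j ++ [s j]) ++ B j) := by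
      rw [← hl i hi, ← hl j hj]
    rcases List.append_eq_append_iff.1 e with ⟨C, h1, -⟩ | ⟨C, h1, -⟩
    · exact hord i hi j hj hij ⟨C, h1⟩
    · obtain ⟨h2, h3⟩ := hord j hj i hi hij.symm ⟨C, h1⟩
      exact ⟨h2.symm, fun u hu w hw hl => h3 w hw u hu hl.symm⟩
  have hmany := al_many (G := G) (R := rest l H) (Finset.insertNone X) Seg
    (by
      intro i hi
      rw [Finset.disjoint_left]
      intro a ha hb
      exact (mem_rest.1 ha).1 (hSegl i hi a hb))
    (fun i hi j hj hij => (hall i hi j hj hij).1)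
    (fun i hi j hj hij => (hall i hi j hj hij).2)
    (fun i hi => hhigh i hi)
  rw [Finset.card_insertNone] at hmany
  -- connectivity
  have hXm : m ≤ X.card := by
    by_contra hlt
    push Not at hlt
    have hc := hconn X hlt
    obtain ⟨h0, hh0⟩ := o.ne
    have hn : (none : Option V) ∈ Finset.insertNone X := by simp
    have hs0 : s none ∈ l := hSegl none hn _ (by simp [Seg])
    have hs1 : s none ∉ X := by
      intro h
      obtain ⟨h, hh, hadj⟩ := ((hX _).1 h).2
      exact hno none hn _ (by simp) h hh hadj
    have hh1 : h0 ∉ X := fun h => o.disj h0 hh0 ((hX _).1 h).1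
    obtain ⟨w⟩ := hc.preconnected ⟨h0, by simpa using hh1⟩ ⟨s none, by simpa using hs1⟩
    have key : ∀ {a b : ((X : Set V)ᶜ : Set V)} (w : (G.induce ((X : Set V)ᶜ)).Walk a b),
        a.1 ∈ H → b.1 ∈ H := by
      intro a b w
      induction w with
      | nil => exact id
      | @cons a b c hadj _ ih =>
        intro ha
        apply ih
        have hadj' : G.Adj a.1 b.1 := by simpa using hadj
        rcases o.closed _ ha _ hadj' with h | h
        · exact h
        · exfalso
          have hb := b.2
          apply hb
          exact (hX _).2 ⟨h, a.1, ha, hadj'⟩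
    exact o.disj _ (key w hh0) hs0
  have hfin : al G ((rest l H ∪ (Finset.insertNone X).biUnion Seg) ∪ H) =
      al G (rest l H ∪ (Finset.insertNone X).biUnion Seg) + al G H := by
    apply al_union_eq
    · rw [Finset.disjoint_left]
      intro a ha hb
      rcases Finset.mem_union.1 ha with ha | ha
      · exact (mem_rest.1 ha).2 hb
      · obtain ⟨i, hi, hai⟩ := Finset.mem_biUnion.1 ha
        exact o.disj a hb (hSegl i hi a hai)
    · intro a ha b hb hab
      rcases Finset.mem_union.1 ha with ha | ha
      · have := mem_rest.1 ha
        rcases o.closed b hb a hab.symm with h | h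
        · exact this.2 h
        · exact this.1 h
      · obtain ⟨i, hi, hai⟩ := Finset.mem_biUnion.1 ha
        exact hno i hi a (List.mem_toFinset.1 hai) b hb hab.symm
  have hle : al G ((rest l H ∪ (Finset.insertNone X).biUnion Seg) ∪ H) ≤ al G Finset.univ :=
    al_mono (Finset.subset_univ _)
  have := o.al_eq
  omega

theorem exists_path (G : SimpleGraph V) (m k : ℕ) (hk : 2 ≤ k)
    (hconn : ∀ S : Finset V, S.card < m → (G.induce ((S : Set V)ᶜ)).Connected)
    (hal : al G Finset.univ ≤ m + k - 1) :
    ∃ l : List V, l.IsChain G.Adj ∧ l.Nodup ∧ al G (Finset.univ \ l.toFinset) ≤ k - 2 := by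
  classical
  -- a path with the smallest independence number of the complement
  let P : ℕ → Prop := fun n => ∃ l : List V, l.IsChain G.Adj ∧ l.Nodup ∧
    al G (Finset.univ \ l.toFinset) = n
  have hP : ∃ n, P n := ⟨_, [], by simp, by simp, rfl⟩
  obtain ⟨l0, c0, n0, e0⟩ := Nat.find_spec hP
  have hmin : ∀ l' : List V, l'.IsChain G.Adj → l'.Nodup →
      Nat.find hP ≤ al G (Finset.univ \ l'.toFinset) :=
    fun l' h1 h2 => Nat.find_min' hP ⟨l', h1, h2, rfl⟩
  by_cases hempty : Finset.univ \ l0.toFinset = ∅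
  · exact ⟨l0, c0, n0, by rw [hempty, al_empty]; omega⟩
  let P' : ℕ → Prop := fun n => ∃ (l : List V) (H : Finset V), l.IsChain G.Adj ∧ l.Nodup ∧
    H.Nonempty ∧ (∀ h ∈ H, h ∉ l) ∧ (∀ h ∈ H, ∀ v, G.Adj h v → v ∈ H ∨ v ∈ l) ∧
    al G (Finset.univ \ l.toFinset) ≤ Nat.find hP ∧ H.card = n
  have hP' : ∃ n, P' n := by
    refine ⟨_, l0, Finset.univ \ l0.toFinset, c0, n0, Finset.nonempty_iff_ne_empty.2 hempty,
      by simp, ?_, e0.le, rfl⟩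
    intro h _ v _
    by_cases hv : v ∈ l0
    · exact Or.inr hv
    · left; simpa using hv
  obtain ⟨l, H, h1, h2, h3, h4, h5, h6, h7⟩ := Nat.find_spec hP'
  have o : Opt G l H :=
    { chain := h1
      nodup := h2
      ne := h3
      disj := h4
      closed := h5
      min0 := fun l' a b => h6.trans (hmin l' a b)
      min1 := by
        intro l' H' a1 a2 a3 a4 a5 a6
        rw [h7]
        exact Nat.find_min' hP' ⟨l', H', a1, a2, a3, a4, a5, a6.trans h6, rfl⟩ }
  refine ⟨l, h1, h2, ?_⟩
  have := o.bound m hconn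
  omega

end WinProof

/-- (Win) Let `k ≥ 2` and `m ≥ 1` be integers and let `G` be a finite `m`-connected simple
graph (more than `m` vertices, and removing any fewer than `m` vertices leaves it connected).
If the independence number of `G` is at most `m + k - 1`, then `G` has a spanning tree with
at most `k` leaves. -/
theorem stmt_5 {V : Type*} [Fintype V] [DecidableEq V] (G : SimpleGraph V)
    (k m : ℕ) (hk : 2 ≤ k) (hm : 1 ≤ m)
    (hcard : m < Fintype.card V)
    (hconn : ∀ S : Finset V, S.card < m → (G.induce ((S : Set V)ᶜ)).Connected)
    (hindep : ∀ s : Finset V,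
      ((s : Set V).Pairwise fun u v => ¬ G.Adj u v) → s.card ≤ m + k - 1) :
    ∃ T : SimpleGraph V, T ≤ G ∧ T.IsTree ∧
      {v : V | (T.neighborSet v).ncard = 1}.ncard ≤ k := by
  have hal : WinProof.al G Finset.univ ≤ m + k - 1 := by
    obtain ⟨s, -, h2, h3⟩ := WinProof.exists_al G Finset.univ
    rw [← h3]
    exact hindep s h2
  have hG : G.Connected := by
    have h0 := hconn ∅ (by rw [Finset.card_empty]; omega)
    have hne : Nonempty V := Fintype.card_pos_iff.1 (by omega)
    refine ⟨fun a b => ?_⟩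
    have := h0.preconnected ⟨a, by simp⟩ ⟨b, by simp⟩
    exact this.map (SimpleGraph.Embedding.induce _).toHom
  obtain ⟨l, hc, hn, hl⟩ := WinProof.exists_path G m k hk hconn hal
  have hB : ∃ r W, ∃ b : V, WinProof.Built G r W {b} ∧
      WinProof.al G (Finset.univ \ W) ≤ k - 2 := by
    rcases List.eq_nil_or_concat l with rfl | ⟨l', b, rfl⟩
    · obtain ⟨r⟩ := hG.nonempty
      refine ⟨r, {r}, r, WinProof.Built.single, (WinProof.al_mono ?_).trans hl⟩
      simp
    · rw [List.concat_eq_append] at hc hn hl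
      obtain ⟨r, h⟩ := WinProof.Built.ofList l' b hn hc
      exact ⟨r, _, b, h, hl⟩
  obtain ⟨r, W, b, hB, hW⟩ := hB
  obtain ⟨L', h1, h2⟩ := WinProof.Built.extend hG (k - 1) _ W {b} le_rfl hB (by
    rw [Finset.card_singleton]; omega)
  obtain ⟨T, t1, t2, t3⟩ := h1.finish
  exact ⟨T, t1, t2, t3.trans (by omega)⟩
end

section
/- (Bondy–Chvátal closure, Hamiltonian path) Let G be a finite simple graph on n vertices and let u and v be two distinct nonadjacent vertices of G with deg(u) + deg(v) ≥ n − 1. Then G has a Hamiltonian path if and only if the graph G + uv obtained from G by adding the edge uv has a Hamiltonian path. -/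
theorem bc_chain_reverse {V : Type*} (G : SimpleGraph V) {L : List V} (h : L.IsChain G.Adj) :
    L.reverse.IsChain G.Adj :=
  List.isChain_reverse.2 (h.imp fun _ _ h => h.symm)

/-- Rotation at a cut: a path in `G + uv` through `uv` yields a path in `G`. -/
theorem bc_rotate {V : Type*} (G : SimpleGraph V) {u v : V} {A B P Q : List V}
    (hA : A.IsChain G.Adj) (hB : B.IsChain G.Adj)
    (hu : A.getLast? = some u) (hv : B.head? = some v) (h : P ++ Q = A ++ B)
    (hP : ∀ x ∈ P.getLast?, G.Adj u x) (hQ : ∀ y ∈ Q.head?, G.Adj v y) :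
    ∃ M : List V, M.IsChain G.Adj ∧ M.Perm (A ++ B) := by
  rcases List.append_eq_append_iff.1 h with ⟨R, rfl, rfl⟩ | ⟨R, rfl, rfl⟩
  · -- `A = P ++ R`, `Q = R ++ B`
    have hR : R ≠ [] := by
      rintro rfl
      have := hP u (by simpa using hu)
      exact G.irrefl this
    refine ⟨P ++ R.reverse ++ B, ?_, ?_⟩
    · rw [List.isChain_append] at hA
      rw [List.isChain_append, List.isChain_append]
      refine ⟨⟨hA.1, bc_chain_reverse G hA.2.1, ?_⟩, hB, ?_⟩
      · intro x hx y hy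
        rw [List.head?_reverse] at hy
        rw [List.getLast?_append_of_ne_nil _ hR] at hu
        rw [hu] at hy
        cases hy
        exact (hP x hx).symm
      · intro x hx y hy
        rw [hv] at hy
        cases hy
        rw [List.getLast?_append_of_ne_nil _ (by simpa using hR), List.getLast?_reverse] at hx
        exact (hQ x (by rw [List.head?_append_of_ne_nil _ hR]; exact hx)).symm
    · exact ((List.reverse_perm R).append_left P).append_right B
  · -- `P = A ++ R`, `B = R ++ Q`
    have hR : R ≠ [] := by
      rintro rfl
      have := hQ v (by simpa using hv)
      exact G.irrefl this
    refine ⟨A ++ (R.reverse ++ Q), ?_, ?_⟩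
    · rw [List.isChain_append] at hB
      rw [List.isChain_append, List.isChain_append]
      refine ⟨hA, ⟨bc_chain_reverse G hB.1, hB.2.1, ?_⟩, ?_⟩
      · intro x hx y hy
        rw [List.getLast?_reverse] at hx
        rw [List.head?_append_of_ne_nil _ hR] at hv
        rw [hv] at hx
        cases hx
        exact hQ y hy
      · intro x hx y hy
        rw [hu] at hx
        cases hx
        rw [List.head?_append_of_ne_nil _ (by simpa using hR), List.head?_reverse] at hy
        exact hP y (by rw [List.getLast?_append_of_ne_nil _ hR]; exact hy)
    · exact ((List.reverse_perm R).append_right Q).append_left A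

theorem bc_key {V : Type*} [Fintype V] [DecidableEq V] (G : SimpleGraph V)
    [DecidableRel G.Adj] {u v : V} (hdeg : Fintype.card V - 1 ≤ G.degree u + G.degree v)
    {A B : List V} (hA : A.IsChain G.Adj) (hB : B.IsChain G.Adj)
    (hu : A.getLast? = some u) (hv : B.head? = some v)
    (hnd : (A ++ B).Nodup) (hmem : ∀ x, x ∈ A ++ B) :
    ∃ M : List V, M.IsChain G.Adj ∧ M.Perm (A ++ B) := by
  by_contra hno
  obtain ⟨L, hL⟩ : ∃ L, L = A ++ B := ⟨_, rfl⟩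
  have hnd' : L.Nodup := hL ▸ hnd
  have hmem' : ∀ x, x ∈ L := hL ▸ hmem
  have hlen : L.length = Fintype.card V := by
    rw [← List.toFinset_card_of_nodup hnd', ← Finset.card_univ]
    congr 1
    ext x
    simp [hmem']
  have hlt : ∀ x, L.idxOf x < L.length := fun x => List.idxOf_lt_length_iff.2 (hmem' x)
  have hinj : Function.Injective (fun x => L.idxOf x) := fun x y h => (List.idxOf_inj (hmem' x)).1 h
  let S : Finset ℕ := insert 0 ((G.neighborFinset u).image fun x => L.idxOf x + 1)
  let T : Finset ℕ := insert L.length ((G.neighborFinset v).image fun x => L.idxOf x)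
  have hS : S.card = G.degree u + 1 := by
    rw [Finset.card_insert_of_notMem (by simp), Finset.card_image_of_injective, G.card_neighborFinset_eq_degree]
    intro x y h
    exact hinj (by simpa using h)
  have hT : T.card = G.degree v + 1 := by
    rw [Finset.card_insert_of_notMem, Finset.card_image_of_injective _ hinj, G.card_neighborFinset_eq_degree]
    intro h
    obtain ⟨x, -, hx⟩ := Finset.mem_image.1 h
    exact absurd (hlt x) (by omega)
  have hSP : ∀ i ∈ S, ∀ x ∈ (L.take i).getLast?, G.Adj u x := by
    intro i hi x hx
    rcases Finset.mem_insert.1 hi with rfl | hi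
    · simp at hx
    · obtain ⟨y, hy, rfl⟩ := Finset.mem_image.1 hi
      rw [List.take_succ_eq_append_getElem (hlt y)] at hx
      simp at hx
      subst hx
      simpa using hy
  have hTQ : ∀ i ∈ T, ∀ x ∈ (L.drop i).head?, G.Adj v x := by
    intro i hi x hx
    rcases Finset.mem_insert.1 hi with rfl | hi
    · simp at hx
    · obtain ⟨y, hy, rfl⟩ := Finset.mem_image.1 hi
      rw [List.drop_eq_getElem_cons (hlt y)] at hx
      simp at hx
      subst hx
      simpa using hy
  have hdisj : Disjoint S T := by
    rw [Finset.disjoint_left]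
    intro i hi hi'
    exact hno (bc_rotate G hA hB hu hv (P := L.take i) (Q := L.drop i)
      (by rw [List.take_append_drop, hL]) (hSP i hi) (hTQ i hi'))
  have hsub : S ∪ T ⊆ (Finset.range (L.length + 1)).erase A.length := by
    intro i hi
    rw [Finset.mem_erase, Finset.mem_range]
    constructor
    · rintro rfl
      rcases Finset.mem_union.1 hi with hi | hi
      · exact G.irrefl (hSP _ hi u (by rw [hL]; simpa using hu))
      · exact G.irrefl (hTQ _ hi v (by rw [hL]; simpa using hv))
    · rcases Finset.mem_union.1 hi with hi | hi
      · rcases Finset.mem_insert.1 hi with rfl | hi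
        · omega
        · obtain ⟨y, hy, rfl⟩ := Finset.mem_image.1 hi
          have := hlt y
          omega
      · rcases Finset.mem_insert.1 hi with rfl | hi
        · omega
        · obtain ⟨y, hy, rfl⟩ := Finset.mem_image.1 hi
          have := hlt y
          omega
  have hc := Finset.card_le_card hsub
  have hle : A.length ≤ L.length := by rw [hL]; simp
  rw [Finset.card_union_of_disjoint hdisj, hS, hT, Finset.card_erase_of_mem
    (by rw [Finset.mem_range]; omega), Finset.card_range, hlen] at hc
  have : 0 < Fintype.card V := Fintype.card_pos_iff.2 ⟨u⟩
  omega

/-- A list decomposed at an edge `ab` of the added kind: both halves are chains of `G`. -/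
theorem bc_split {V : Type*} (G : SimpleGraph V) {u v a b : V} {X Y : List V}
    (h : (X ++ a :: b :: Y).IsChain (G ⊔ SimpleGraph.edge u v).Adj)
    (hnd : (X ++ a :: b :: Y).Nodup) (hab : (a = u ∧ b = v) ∨ (a = v ∧ b = u)) :
    (X ++ [a]).IsChain G.Adj ∧ (b :: Y).IsChain G.Adj := by
  have e : X ++ a :: b :: Y = (X ++ [a]) ++ (b :: Y) := by simp
  rw [e] at h hnd
  rw [List.isChain_append] at h
  have hd := List.disjoint_of_nodup_append hnd
  have hb : b ∉ X ++ [a] := fun hb => hd hb (by simp)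
  have ha : a ∉ b :: Y := fun ha => hd (by simp) ha
  refine ⟨h.1.imp_of_mem_imp ?_, h.2.1.imp_of_mem_imp ?_⟩
  all_goals
    intro x y hx hy hxy
    rw [SimpleGraph.sup_adj, SimpleGraph.edge_adj] at hxy
    rcases hxy with hxy | hxy
    · exact hxy
    · exfalso
      rcases hab with ⟨rfl, rfl⟩ | ⟨rfl, rfl⟩ <;>
        rcases hxy with ⟨⟨rfl, rfl⟩ | ⟨rfl, rfl⟩, -⟩ <;> contradiction


/-- (Bondy–Chvátal, Hamiltonian path) Let `G` be a finite simple graph on `n` vertices and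
let `u, v` be distinct nonadjacent vertices with `deg u + deg v ≥ n - 1`. Then `G` has a
Hamiltonian path iff `G + uv` has a Hamiltonian path. -/
theorem stmt_7 {V : Type*} [Fintype V] [DecidableEq V] (G : SimpleGraph V)
    [DecidableRel G.Adj] (u v : V) (huv : u ≠ v) (hadj : ¬ G.Adj u v)
    (hdeg : Fintype.card V - 1 ≤ G.degree u + G.degree v) :
    (∃ (a b : V) (p : G.Walk a b), p.IsHamiltonian) ↔
      (∃ (a b : V) (p : (G ⊔ SimpleGraph.edge u v).Walk a b), p.IsHamiltonian) := by
  constructor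
  · rintro ⟨a, b, p, hp⟩
    refine ⟨a, b, p.mapLe le_sup_left, fun x => ?_⟩
    have := hp x
    simpa using this
  · rintro ⟨a, b, p, hp⟩
    suffices h : ∃ M : List V, M.IsChain G.Adj ∧ M.Perm p.support by
      obtain ⟨M, hM, hperm⟩ := h
      have hne : M ≠ [] := by
        rintro rfl
        exact p.support_ne_nil (List.nil_perm.1 hperm)
      refine ⟨_, _, SimpleGraph.Walk.ofSupport M hne hM, fun x => ?_⟩
      rw [SimpleGraph.Walk.support_ofSupport, hperm.count_eq]
      exact hp x
    have hch := p.isChain_adj_support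
    have hnd : p.support.Nodup := hp.isPath.support_nodup
    have hmem : ∀ x, x ∈ p.support := hp.mem_support
    generalize p.support = L at hch hnd hmem
    by_cases hG : L.IsChain G.Adj
    · exact ⟨L, hG, List.Perm.refl _⟩
    · rw [List.isChain_iff_forall_rel_of_append_cons_cons] at hG
      push Not at hG
      obtain ⟨x, y, X, Y, rfl, hxy⟩ := hG
      have h1 : (G ⊔ SimpleGraph.edge u v).Adj x y :=
        List.isChain_iff_forall_rel_of_append_cons_cons.1 hch rfl
      rw [SimpleGraph.sup_adj, SimpleGraph.edge_adj] at h1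
      have hab := (h1.resolve_left hxy).1
      obtain ⟨hA, hB⟩ := bc_split G hch hnd hab
      have e : X ++ x :: y :: Y = (X ++ [x]) ++ (y :: Y) := by simp
      rw [e] at hnd hmem ⊢
      refine bc_key G (u := x) (v := y) ?_ hA hB (by simp) (by simp) hnd hmem
      rcases hab with ⟨rfl, rfl⟩ | ⟨rfl, rfl⟩ <;> omega
end
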